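/- Let n ≥ 6. For a generic choice (in the sense described in the context) of three linear subspaces L, M, N ⊂ ℂ^{n+1} of dimension n−2 (codimension 3) and of points l₁,l₂,l₃ ∈ L, m₁,m₂,m₃ ∈ M, n₁,n₂ ∈ N, the ℂ-vector space of homogeneous cubic polynomials in ℂ[x₀,…,xₙ] that vanish at every point of L ∪ M ∪ N and are singular at all eight points l₁,l₂,l₃,m₁,m₂,m₃,n₁,n₂ has dimension 3; moreover, every nonzero vector q ∈ ℂ^{n+1} such that all cubics in this space are singular at q lies in L ∪ M ∪ N. -/

import Mathlib

/-!
Let `L`, `M`, `N` be the common zero sets of triples of linear forms `a`, `b`, `c`. The products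
`aᵢ bⱼ cₖ` vanish on `L ∪ M ∪ N`, and for general subspaces they form a basis of the space of cubics
with this property. So these cubics are the forms `f_T = ∑ T i j k • aᵢ bⱼ cₖ` of tensors
`T ∈ ℂ³ ⊗ ℂ³ ⊗ ℂ³` (`cubicForm`). At a point `l` with `a(l) = 0`, the form `f_T` is singular if and
only if `T(·, b(l), c(l)) = 0`, and similarly on `M` and `N`. The eight points thus impose
`8 · 3 = 24` linear conditions (`condRow`), and if these are independent, a space of dimension
`27 - 24 = 3` remains.

Suppose that all cubics in this space are singular at `q`. For each `x`, the functional
`T ↦ ∂ₓ f_T (q)` is then a combination of the 24 conditions. This functional depends linearly on the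
triple `(b(q) ⊗ c(q), a(q) ⊗ c(q), a(q) ⊗ b(q))` (`triPt`, `polarMap`). The triples for which
all these functionals are combinations of the 24 conditions form a linear space; it contains the
eight triples of the given points, and in general it is spanned by them. Hence `b(q) ⊗ c(q)` is a
combination of the three tensors `b(lₛ) ⊗ c(lₛ)`, and `a(q) ⊗ c(q)` is a combination of the three
tensors `a(mₛ) ⊗ c(mₛ)`. A tensor of rank one which is a combination of `e₁ ⊗ f₁`, `e₂ ⊗ f₂`,
`e₃ ⊗ f₃`, for bases `e` and `f`, is a multiple of one of them (`exists_proportional`). So if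
`q ∉ L ∪ M ∪ N`, then `c(q)` is nonzero and proportional to some `c(lₛ)` and to some `c(mᵣ)`, which
are not proportional to each other (`goodConfig_conclusion`).

Everything required above of the configuration (`GoodConfig`, and the bound 27 for the dimension of
the space of cubics vanishing on `L ∪ M ∪ N`) is an upper bound for the dimension of the kernel of a
polynomial family of linear maps, or the independence of vectors depending polynomially on the
parameters. Such conditions are open in the Zariski topology, so they hold generically once they
hold for one configuration (`eventually_finrank_ker_le`, `generic_of_goodConfig`). They are
verified for subspaces given by linear forms in `x₀, …, x₇` and for points with small integer
coordinates (`ref_goodConfig`). The bound 27 is obtained there by polarization: the symmetric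
trilinear form of a cubic vanishing on the three subspaces is determined by 27 of its values
(`finrank_ref_cubics`).
-/

open MvPolynomial

noncomputable section

/-- The linear form `a₀x₀ + ⋯ + aₙxₙ` with coefficient vector `a`. -/
def linForm {n : ℕ} (a : Fin (n + 1) → ℂ) : MvPolynomial (Fin (n + 1)) ℂ :=
  ∑ i, C (a i) * X i

/-- Evaluation at the point `v`, as a linear map. -/
def evalAt {n : ℕ} (v : Fin (n + 1) → ℂ) : MvPolynomial (Fin (n + 1)) ℂ →ₗ[ℂ] ℂ :=
  (aeval v).toLinearMap

/-- The linear map `f ↦ (∂f/∂xᵢ)(p)`. -/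
def evalPDeriv {n : ℕ} (p : Fin (n + 1) → ℂ) (i : Fin (n + 1)) :
    MvPolynomial (Fin (n + 1)) ℂ →ₗ[ℂ] ℂ :=
  evalAt p ∘ₗ (pderiv i).toLinearMap

/-- `f` is singular at `p`: all partial derivatives of `f` vanish at `p`. -/
def SingularAt {n : ℕ} (f : MvPolynomial (Fin (n + 1)) ℂ) (p : Fin (n + 1) → ℂ) : Prop :=
  ∀ i, evalPDeriv p i f = 0

/-- The space of homogeneous degree-`d` polynomials in `n+1` variables that vanish at every
point of `V` and are singular at every point of `S`. -/
def SingSpace (n : ℕ) (d : ℕ) (S V : Set (Fin (n + 1) → ℂ)) :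
    Submodule ℂ (MvPolynomial (Fin (n + 1)) ℂ) :=
  homogeneousSubmodule (Fin (n + 1)) ℂ d ⊓ (⨅ v ∈ V, LinearMap.ker (evalAt v)) ⊓
    ⨅ p ∈ S, ⨅ i, LinearMap.ker (evalPDeriv p i)

/-- A property of parameters `t : ι → ℂ` holds for a generic choice of `t` if there is a
nonzero polynomial `F` in the variables `ι` such that the property holds whenever
`F(t) ≠ 0`. -/
def Generic {ι : Type} [Fintype ι] (P : (ι → ℂ) → Prop) : Prop :=
  ∃ F : MvPolynomial ι ℂ, F ≠ 0 ∧ ∀ t : ι → ℂ, eval t F ≠ 0 → P t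

end

/-! ### Polynomial families and semicontinuity -/

/-- The vector-valued functions of `t` that are polynomial in the coordinates of `t`. -/
def PolyFam (ι E : Type*) [AddCommGroup E] [Module ℂ E] : Submodule ℂ ((ι → ℂ) → E) :=
  Submodule.span ℂ {w | ∃ (p : MvPolynomial ι ℂ) (e : E), w = fun t => eval t p • e}

section PolyFam

variable {ι E F G : Type*} [AddCommGroup E] [Module ℂ E] [AddCommGroup F] [Module ℂ F]
  [AddCommGroup G] [Module ℂ G]

theorem pf_const (e : E) : (fun _ : ι → ℂ => e) ∈ PolyFam ι E :=
  Submodule.subset_span ⟨1, e, by simp⟩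

theorem pf_coord (i : ι) : (fun t : ι → ℂ => t i) ∈ PolyFam ι ℂ :=
  Submodule.subset_span ⟨X i, 1, by simp⟩

theorem pf_scalar {f : (ι → ℂ) → ℂ} (hf : f ∈ PolyFam ι ℂ) :
    ∃ p : MvPolynomial ι ℂ, ∀ t, f t = eval t p := by
  induction hf using Submodule.span_induction with
  | mem w hw =>
    obtain ⟨p, e, rfl⟩ := hw
    exact ⟨p * C e, fun t => by simp⟩
  | zero => exact ⟨0, fun t => by simp⟩
  | add x y _ _ hx hy =>
    obtain ⟨p, hp⟩ := hx
    obtain ⟨q, hq⟩ := hy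
    exact ⟨p + q, fun t => by simp [hp, hq]⟩
  | smul a x _ hx =>
    obtain ⟨p, hp⟩ := hx
    exact ⟨C a * p, fun t => by simp [hp]⟩

theorem pf_add {v w : (ι → ℂ) → E} (hv : v ∈ PolyFam ι E) (hw : w ∈ PolyFam ι E) :
    (fun t => v t + w t) ∈ PolyFam ι E := add_mem hv hw

theorem pf_sub {v w : (ι → ℂ) → E} (hv : v ∈ PolyFam ι E) (hw : w ∈ PolyFam ι E) :
    (fun t => v t - w t) ∈ PolyFam ι E := sub_mem hv hw

theorem pf_neg {v : (ι → ℂ) → E} (hv : v ∈ PolyFam ι E) :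
    (fun t => -v t) ∈ PolyFam ι E := neg_mem hv

theorem pf_csmul (a : ℂ) {v : (ι → ℂ) → E} (hv : v ∈ PolyFam ι E) :
    (fun t => a • v t) ∈ PolyFam ι E := Submodule.smul_mem _ a hv

theorem pf_map (φ : E →ₗ[ℂ] F) {w : (ι → ℂ) → E} (hw : w ∈ PolyFam ι E) :
    (fun t => φ (w t)) ∈ PolyFam ι F := by
  induction hw using Submodule.span_induction with
  | mem w hw =>
    obtain ⟨p, e, rfl⟩ := hw
    exact Submodule.subset_span ⟨p, φ e, by simp⟩
  | zero => simpa using pf_const (0 : F)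
  | add x y _ _ hx hy => simpa using pf_add hx hy
  | smul a x _ hx => simpa using pf_csmul a hx

theorem pf_smul_eval (p : MvPolynomial ι ℂ) {w : (ι → ℂ) → E} (hw : w ∈ PolyFam ι E) :
    (fun t => eval t p • w t) ∈ PolyFam ι E := by
  induction hw using Submodule.span_induction with
  | mem w hw =>
    obtain ⟨q, e, rfl⟩ := hw
    exact Submodule.subset_span ⟨p * q, e, by simp [mul_smul]⟩
  | zero => simpa using pf_const (0 : E)
  | add x y _ _ hx hy => simpa using pf_add hx hy
  | smul a x _ hx => simpa [smul_comm a] using pf_csmul a hx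

theorem pf_bilin (B : E →ₗ[ℂ] F →ₗ[ℂ] G) {v : (ι → ℂ) → E} {w : (ι → ℂ) → F}
    (hv : v ∈ PolyFam ι E) (hw : w ∈ PolyFam ι F) :
    (fun t => B (v t) (w t)) ∈ PolyFam ι G := by
  induction hv using Submodule.span_induction with
  | mem v hv =>
    obtain ⟨q, e, rfl⟩ := hv
    simpa using pf_smul_eval q (pf_map (B e) hw)
  | zero => simpa using pf_const (0 : G)
  | add x y _ _ hx hy => simpa using pf_add hx hy
  | smul a x _ hx => simpa using pf_csmul a hx

theorem pf_sum {κ : Type*} (s : Finset κ) {w : κ → (ι → ℂ) → E}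
    (hw : ∀ k ∈ s, w k ∈ PolyFam ι E) : (fun t => ∑ k ∈ s, w k t) ∈ PolyFam ι E := by
  simpa [Finset.sum_fn] using sum_mem hw

theorem pf_mul {R : Type*} [CommRing R] [Algebra ℂ R] {v w : (ι → ℂ) → R}
    (hv : v ∈ PolyFam ι R) (hw : w ∈ PolyFam ι R) :
    (fun t => v t * w t) ∈ PolyFam ι R := pf_bilin (LinearMap.mul ℂ R) hv hw

theorem pf_smul {f : (ι → ℂ) → ℂ} {w : (ι → ℂ) → E}
    (hf : f ∈ PolyFam ι ℂ) (hw : w ∈ PolyFam ι E) :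
    (fun t => f t • w t) ∈ PolyFam ι E := pf_bilin (LinearMap.lsmul ℂ E) hf hw

theorem pf_prod {R : Type*} [CommRing R] [Algebra ℂ R] {κ : Type*} (s : Finset κ)
    {w : κ → (ι → ℂ) → R} (hw : ∀ k ∈ s, w k ∈ PolyFam ι R) :
    (fun t => ∏ k ∈ s, w k t) ∈ PolyFam ι R := by
  classical
  induction s using Finset.induction_on with
  | empty => simpa using pf_const (1 : R)
  | insert a s ha ih =>
    simp only [Finset.prod_insert ha]
    exact pf_mul (hw a (by simp)) (ih fun k hk => hw k (by simp [hk]))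

theorem pf_pi {κ : Type*} [Finite κ] {w : (ι → ℂ) → κ → E}
    (hw : ∀ k, (fun t => w t k) ∈ PolyFam ι E) : w ∈ PolyFam ι (κ → E) := by
  classical
  cases nonempty_fintype κ
  have h : w = fun t => ∑ k, LinearMap.single ℂ (fun _ : κ => E) k (w t k) := by
    funext t
    simp [LinearMap.single_apply, Finset.univ_sum_single]
  rw [h]
  exact pf_sum _ fun k _ => pf_map _ (hw k)

theorem pf_det {κ : Type*} [Fintype κ] [DecidableEq κ] {M : (ι → ℂ) → Matrix κ κ ℂ}
    (hM : ∀ i j, (fun t => M t i j) ∈ PolyFam ι ℂ) : (fun t => (M t).det) ∈ PolyFam ι ℂ := by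
  simp only [Matrix.det_apply]
  refine pf_sum _ fun σ _ => ?_
  have := pf_prod (R := ℂ) Finset.univ (w := fun i t => M t (σ i) i) fun i _ => hM _ _
  rcases Int.units_eq_one_or (Equiv.Perm.sign σ) with h | h
  · simpa [h] using this
  · simpa [h] using pf_neg this

theorem pf_adjugate {κ : Type*} [Fintype κ] [DecidableEq κ] {M : (ι → ℂ) → Matrix κ κ ℂ}
    (hM : ∀ i j, (fun t => M t i j) ∈ PolyFam ι ℂ) (i j : κ) :
    (fun t => (M t).adjugate i j) ∈ PolyFam ι ℂ := by
  simp only [Matrix.adjugate_apply]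
  refine pf_det fun k l => ?_
  by_cases h : k = j
  · subst h
    simpa using pf_const _
  · simpa [Matrix.updateRow_apply, h] using hM k l

theorem pf_aeval {R : Type*} [CommRing R] [Algebra ℂ R] {σ : Type*} {y : (ι → ℂ) → σ → R}
    (hy : ∀ i, (fun t => y t i) ∈ PolyFam ι R) (f : MvPolynomial σ ℂ) :
    (fun t => aeval (y t) f) ∈ PolyFam ι R := by
  induction f using MvPolynomial.induction_on with
  | C a => simpa using pf_const (algebraMap ℂ R a)
  | add p q hp hq => simpa using pf_add hp hq
  | mul_X p i hp => simpa using pf_mul hp (hy i)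

end PolyFam

/-- The neighbourhood filter of `t₀` in the Zariski topology: a set is a neighbourhood if it
contains a principal open set `{F ≠ 0}` around `t₀`. -/
def zNhds {ι : Type*} (t₀ : ι → ℂ) : Filter (ι → ℂ) where
  sets := {s | ∃ F : MvPolynomial ι ℂ, eval t₀ F ≠ 0 ∧ ∀ t, eval t F ≠ 0 → t ∈ s}
  univ_sets := ⟨1, by simp, fun _ _ => trivial⟩
  sets_of_superset := fun ⟨F, h, hF⟩ hxy => ⟨F, h, fun t ht => hxy (hF t ht)⟩
  inter_sets := fun ⟨F, h, hF⟩ ⟨G, h', hG⟩ =>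
    ⟨F * G, by simp [h, h'], fun t ht => by
      simp only [map_mul, ne_eq, mul_eq_zero, not_or] at ht
      exact ⟨hF t ht.1, hG t ht.2⟩⟩

theorem eventually_zNhds {ι : Type*} {t₀ : ι → ℂ} {P : (ι → ℂ) → Prop} :
    (∀ᶠ t in zNhds t₀, P t) ↔
      ∃ F : MvPolynomial ι ℂ, eval t₀ F ≠ 0 ∧ ∀ t, eval t F ≠ 0 → P t := Iff.rfl

theorem eventually_ne_zero {ι : Type*} {t₀ : ι → ℂ} {f : (ι → ℂ) → ℂ} (hf : f ∈ PolyFam ι ℂ)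
    (h : f t₀ ≠ 0) : ∀ᶠ t in zNhds t₀, f t ≠ 0 := by
  obtain ⟨p, hp⟩ := pf_scalar hf
  exact eventually_zNhds.2 ⟨p, by rwa [← hp], fun t ht => by rwa [hp]⟩

/-- Upper semicontinuity of the dimension of the kernel of a polynomial family of linear maps. -/
theorem eventually_finrank_ker_le {ι E V : Type*} [AddCommGroup E] [Module ℂ E]
    [AddCommGroup V] [Module ℂ V] [FiniteDimensional ℂ V] {t₀ : ι → ℂ}
    {Λ : (ι → ℂ) → V →ₗ[ℂ] E} (hΛ : ∀ v, (fun t => Λ t v) ∈ PolyFam ι E) {k : ℕ}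
    (h : Module.finrank ℂ (LinearMap.ker (Λ t₀)) ≤ k) :
    ∀ᶠ t in zNhds t₀, Module.finrank ℂ (LinearMap.ker (Λ t)) ≤ k := by
  classical
  let R := LinearMap.range (Λ t₀)
  obtain ⟨s, hs⟩ := (Λ t₀).rangeRestrict.exists_rightInverse_of_surjective
    (LinearMap.range_rangeRestrict _)
  obtain ⟨g, hg⟩ := R.subtype.exists_leftInverse_of_injective (Submodule.ker_subtype _)
  -- `φ t` is an endomorphism of the range of `Λ t₀`, equal to the identity at `t₀`
  let φ : (ι → ℂ) → R →ₗ[ℂ] R := fun t => g ∘ₗ Λ t ∘ₗ s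
  have hφ0 : φ t₀ = LinearMap.id := by
    ext1 x
    have h1 : Λ t₀ (s x) = R.subtype x := by
      have := LinearMap.congr_fun hs x
      simpa using congrArg Subtype.val this
    have h2 := LinearMap.congr_fun hg x
    change g (Λ t₀ (s x)) = x
    rw [h1]
    simpa using h2
  let b := Module.finBasis ℂ R
  have hdet : (fun t => LinearMap.det (φ t)) ∈ PolyFam ι ℂ := by
    simp only [← LinearMap.det_toMatrix b]
    refine pf_det fun i j => ?_
    simp only [LinearMap.toMatrix_apply]
    exact pf_map (b.coord i ∘ₗ g) (hΛ (s (b j)))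
  filter_upwards [eventually_ne_zero hdet (by simp [hφ0])] with t ht
  have hinj : Function.Injective (φ t) := by
    have := LinearMap.equivOfDetNeZero (φ t) ht |>.injective
    exact this
  have h1 : Module.finrank ℂ R ≤ Module.finrank ℂ (LinearMap.range (Λ t)) := by
    have hi : Function.Injective ((Λ t).rangeRestrict ∘ₗ s) := by
      intro x y hxy
      apply hinj
      have : Λ t (s x) = Λ t (s y) := congrArg Subtype.val hxy
      change g (Λ t (s x)) = g (Λ t (s y))
      rw [this]
    exact LinearMap.finrank_le_finrank_of_injective hi
  have h2 := (Λ t).finrank_range_add_finrank_ker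
  have h3 := (Λ t₀).finrank_range_add_finrank_ker
  change Module.finrank ℂ R + _ = _ at h3
  omega

theorem eventually_injective {ι E V : Type*} [AddCommGroup E] [Module ℂ E]
    [AddCommGroup V] [Module ℂ V] [FiniteDimensional ℂ V] {t₀ : ι → ℂ}
    {Λ : (ι → ℂ) → V →ₗ[ℂ] E} (hΛ : ∀ v, (fun t => Λ t v) ∈ PolyFam ι E)
    (h : Function.Injective (Λ t₀)) : ∀ᶠ t in zNhds t₀, Function.Injective (Λ t) := by
  rw [← LinearMap.ker_eq_bot] at h
  filter_upwards [eventually_finrank_ker_le hΛ (k := 0) (by rw [h]; simp)] with t ht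
  rw [← LinearMap.ker_eq_bot]
  exact Submodule.finrank_eq_zero.1 (by omega)

theorem eventually_linearIndependent {ι κ E : Type*} [AddCommGroup E] [Module ℂ E] [Fintype κ]
    {t₀ : ι → ℂ} {w : (ι → ℂ) → κ → E} (hw : ∀ k, (fun t => w t k) ∈ PolyFam ι E)
    (h : LinearIndependent ℂ (w t₀)) : ∀ᶠ t in zNhds t₀, LinearIndependent ℂ (w t) := by
  simp only [linearIndependent_iff_injective_fintypeLinearCombination] at h ⊢
  refine eventually_injective (Λ := fun t => Fintype.linearCombination ℂ (w t)) (fun v => ?_) h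
  simp only [Fintype.linearCombination_apply]
  exact pf_sum _ fun k _ => Submodule.smul_mem _ _ (hw k)

/-! ### Tensors, their cubics and the conditions at the eight points -/

/-- Tensors in `ℂ³ ⊗ ℂ³ ⊗ ℂ³`, as arrays. -/
abbrev Tens := Fin 3 × Fin 3 × Fin 3 → ℂ

/-- The index set of the `24` linear conditions on a tensor: three for each of the points
`l s`, `m s`, `nn s`. -/
abbrev CondIdx := (Fin 3 × Fin 3) ⊕ (Fin 3 × Fin 3) ⊕ (Fin 2 × Fin 3)

/-- Triples of `3 × 3` arrays; the three entries stand for elements of `B ⊗ C`, `A ⊗ C` and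
`A ⊗ B`, where `A`, `B`, `C` are the three copies of `ℂ³`. -/
abbrev TriMat := Fin 3 → Fin 3 → Fin 3 → ℂ

/-- The cubic `∑ T i j k • aᵢ bⱼ cₖ` of a tensor `T`, where the `aᵢ`, `bⱼ`, `cₖ` are the linear
forms given by the rows of `a`, `b`, `c`. -/
noncomputable def cubicForm {n : ℕ} (a b c : Matrix (Fin 3) (Fin (n + 1)) ℂ) :
    Tens →ₗ[ℂ] MvPolynomial (Fin (n + 1)) ℂ :=
  Fintype.linearCombination ℂ
    fun p : Fin 3 × Fin 3 × Fin 3 => linForm (a p.1) * linForm (b p.2.1) * linForm (c p.2.2)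

/-- The `24` conditions `T(·, b(l), c(l)) = 0`, `T(a(m), ·, c(m)) = 0`, `T(a(n), b(n), ·) = 0`,
each written as a vector to be paired with `T`. -/
def condRow {n : ℕ} (a b c : Matrix (Fin 3) (Fin (n + 1)) ℂ) (l m : Fin 3 → Fin (n + 1) → ℂ)
    (nn : Fin 2 → Fin (n + 1) → ℂ) : Matrix CondIdx (Fin 3 × Fin 3 × Fin 3) ℂ
  | .inl (s, i), p => if p.1 = i then b.mulVec (l s) p.2.1 * c.mulVec (l s) p.2.2 else 0
  | .inr (.inl (s, j)), p =>
      if p.2.1 = j then a.mulVec (m s) p.1 * c.mulVec (m s) p.2.2 else 0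
  | .inr (.inr (s, k)), p =>
      if p.2.2 = k then a.mulVec (nn s) p.1 * b.mulVec (nn s) p.2.1 else 0

/-- The triple `(b(v) ⊗ c(v), a(v) ⊗ c(v), a(v) ⊗ b(v))`. -/
def triPt {n : ℕ} (a b c : Matrix (Fin 3) (Fin (n + 1)) ℂ) (v : Fin (n + 1) → ℂ) : TriMat :=
  ![fun j k => b.mulVec v j * c.mulVec v k, fun i k => a.mulVec v i * c.mulVec v k,
    fun i j => a.mulVec v i * b.mulVec v j]

/-- The linear map `ζ ↦ a(x) ⊗ ζ₀ + b(x) ⊗ ζ₁ + c(x) ⊗ ζ₂` for the basis vector `x` of `ℂⁿ⁺¹`.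
Applied to `triPt a b c v`, it represents the functional `T ↦ ∂ₓ (cubicForm T) (v)`. -/
def polarMap {n : ℕ} (a b c : Matrix (Fin 3) (Fin (n + 1)) ℂ) (x : Fin (n + 1)) :
    TriMat →ₗ[ℂ] Tens where
  toFun ζ p := a p.1 x * ζ 0 p.2.1 p.2.2 + b p.2.1 x * ζ 1 p.1 p.2.2 + c p.2.2 x * ζ 2 p.1 p.2.1
  map_add' ζ ξ := by ext p; simp only [Pi.add_apply]; ring
  map_smul' r ζ := by
    ext p; simp only [Pi.smul_apply, smul_eq_mul, RingHom.id_apply]; ring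

/-- The linear map whose kernel consists of the pairs `(ζ, μ)` such that, for the basis vectors
`x = ε 0, …, ε 6`, the tensor `polarMap x ζ` is the combination of the rows of `condRow` with
coefficients `μ x`. -/
def polarSys {n : ℕ} (ε : Fin 7 → Fin (n + 1)) (a b c : Matrix (Fin 3) (Fin (n + 1)) ℂ)
    (l m : Fin 3 → Fin (n + 1) → ℂ) (nn : Fin 2 → Fin (n + 1) → ℂ) :
    (TriMat × (Fin 7 → CondIdx → ℂ)) →ₗ[ℂ] (Fin 7 → Tens) :=
  LinearMap.pi fun x => polarMap a b c (ε x) ∘ₗ LinearMap.fst ℂ _ _ -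
    (condRow a b c l m nn).vecMulLinear ∘ₗ LinearMap.proj x ∘ₗ LinearMap.snd ℂ _ _

/-- The eight points of `TriMat` coming from the eight singular points. -/
def triKnown {n : ℕ} (a b c : Matrix (Fin 3) (Fin (n + 1)) ℂ) (l m : Fin 3 → Fin (n + 1) → ℂ)
    (nn : Fin 2 → Fin (n + 1) → ℂ) : Fin 3 ⊕ Fin 3 ⊕ Fin 2 → TriMat
  | .inl s => ![fun j k => b.mulVec (l s) j * c.mulVec (l s) k, 0, 0]
  | .inr (.inl s) => ![0, fun i k => a.mulVec (m s) i * c.mulVec (m s) k, 0]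
  | .inr (.inr s) => ![0, 0, fun i j => a.mulVec (nn s) i * b.mulVec (nn s) j]

/-- The open conditions on linear forms `a`, `b`, `c` and points `l`, `m`, `nn` that together imply
the theorem, apart from the bound for the dimension of the space of cubics vanishing on the three
subspaces. In `polarSys` only the seven basis vectors `ε` are used, so that the size of this linear
system does not depend on `n`. -/
structure GoodConfig {n : ℕ} (ε : Fin 7 → Fin (n + 1)) (a b c : Matrix (Fin 3) (Fin (n + 1)) ℂ)
    (l m : Fin 3 → Fin (n + 1) → ℂ) (nn : Fin 2 → Fin (n + 1) → ℂ) : Prop where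
  cubic : Function.Injective (cubicForm a b c)
  cond : Module.finrank ℂ (LinearMap.ker (condRow a b c l m nn).mulVecLin) ≤ 3
  polar : Module.finrank ℂ (LinearMap.ker (polarSys ε a b c l m nn)) ≤ 8
  known : LinearIndependent ℂ (triKnown a b c l m nn)
  bl : LinearIndependent ℂ fun s => b.mulVec (l s)
  cl : LinearIndependent ℂ fun s => c.mulVec (l s)
  am : LinearIndependent ℂ fun s => a.mulVec (m s)
  cm : LinearIndependent ℂ fun s => c.mulVec (m s)
  clm : ∀ s r, LinearIndependent ℂ ![c.mulVec (l s), c.mulVec (m r)]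

theorem eval_linForm {n : ℕ} (a : Matrix (Fin 3) (Fin (n + 1)) ℂ) (i : Fin 3)
    (v : Fin (n + 1) → ℂ) : eval v (linForm (a i)) = a.mulVec v i := by
  simp [linForm, Matrix.mulVec, dotProduct]

theorem pderiv_linForm {n : ℕ} (a : Fin (n + 1) → ℂ) (x : Fin (n + 1)) :
    pderiv x (linForm a) = C (a x) := by
  classical
  simp [linForm, pderiv_X, Pi.single_apply]

theorem linForm_isHomogeneous {n : ℕ} (a : Fin (n + 1) → ℂ) : (linForm a).IsHomogeneous 1 :=
  IsHomogeneous.sum _ _ _ fun i _ => by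
    simpa using (isHomogeneous_C _ (a i)).mul (isHomogeneous_X ℂ i)

theorem cubicForm_apply {n : ℕ} (a b c : Matrix (Fin 3) (Fin (n + 1)) ℂ) (T : Tens) :
    cubicForm a b c T = ∑ p : Fin 3 × Fin 3 × Fin 3,
      T p • (linForm (a p.1) * linForm (b p.2.1) * linForm (c p.2.2)) := by
  simp [cubicForm, Fintype.linearCombination_apply]

theorem evalAt_cubicForm {n : ℕ} (a b c : Matrix (Fin 3) (Fin (n + 1)) ℂ) (T : Tens)
    (v : Fin (n + 1) → ℂ) : evalAt v (cubicForm a b c T) =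
      ∑ p : Fin 3 × Fin 3 × Fin 3, T p * (a.mulVec v p.1 * b.mulVec v p.2.1 * c.mulVec v p.2.2) := by
  simp [cubicForm_apply, evalAt, eval_linForm]

theorem evalPDeriv_cubicForm {n : ℕ} (a b c : Matrix (Fin 3) (Fin (n + 1)) ℂ) (T : Tens)
    (v : Fin (n + 1) → ℂ) (x : Fin (n + 1)) : evalPDeriv v x (cubicForm a b c T) =
      T ⬝ᵥ polarMap a b c x (triPt a b c v) := by
  simp only [evalPDeriv, evalAt, cubicForm_apply, LinearMap.comp_apply, map_sum, map_smul,
    dotProduct, polarMap, triPt, AlgHom.toLinearMap_apply, Derivation.coeFn_coe, smul_eq_mul]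
  refine Finset.sum_congr rfl fun p _ => ?_
  congr 1
  simp [Derivation.leibniz, pderiv_linForm, eval_linForm]
  ring

theorem cubicForm_isHomogeneous {n : ℕ} (a b c : Matrix (Fin 3) (Fin (n + 1)) ℂ) (T : Tens) :
    cubicForm a b c T ∈ homogeneousSubmodule (Fin (n + 1)) ℂ 3 := by
  rw [cubicForm_apply]
  refine Submodule.sum_mem _ fun p _ => Submodule.smul_mem _ _ ?_
  exact ((linForm_isHomogeneous _).mul (linForm_isHomogeneous _)).mul (linForm_isHomogeneous _)

theorem mem_singSpace {n d : ℕ} {S U : Set (Fin (n + 1) → ℂ)} {f : MvPolynomial (Fin (n + 1)) ℂ} :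
    f ∈ SingSpace n d S U ↔ f ∈ homogeneousSubmodule (Fin (n + 1)) ℂ d ∧
      (∀ v ∈ U, evalAt v f = 0) ∧ ∀ p ∈ S, SingularAt f p := by
  simp [SingSpace, SingularAt, and_assoc]

instance {n d : ℕ} : FiniteDimensional ℂ (homogeneousSubmodule (Fin (n + 1)) ℂ d) := by
  classical
  have h : homogeneousSubmodule (Fin (n + 1)) ℂ d ≤
      Submodule.span ℂ (((Finset.univ : Finset (Fin (n + 1))).finsuppAntidiag d).image
        fun e => monomial e (1 : ℂ) : Finset (MvPolynomial (Fin (n + 1)) ℂ)) := by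
    intro f hf
    rw [← f.support_sum_monomial_coeff]
    refine Submodule.sum_mem _ fun e he => ?_
    have h1 : monomial e (coeff e f) = coeff e f • monomial e (1 : ℂ) := by
      rw [smul_monomial, smul_eq_mul, mul_one]
    rw [h1]
    refine Submodule.smul_mem _ _ (Submodule.subset_span ?_)
    simp only [Finset.coe_image, Set.mem_image, Finset.mem_coe, Finset.mem_finsuppAntidiag']
    refine ⟨e, ⟨?_, by simp⟩, rfl⟩
    have := hf (mem_support_iff.1 he)
    simpa [Finsupp.weight_apply, Finsupp.sum] using this
  exact Submodule.finiteDimensional_of_le h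

instance {n d : ℕ} (S U : Set (Fin (n + 1) → ℂ)) : FiniteDimensional ℂ (SingSpace n d S U) :=
  Submodule.finiteDimensional_of_le (S₂ := homogeneousSubmodule (Fin (n + 1)) ℂ d)
    fun _ hf => (mem_singSpace.1 hf).1

/-! ### Consequences of the open conditions -/

section Conclusion

variable {n : ℕ} {ε : Fin 7 → Fin (n + 1)} {a b c : Matrix (Fin 3) (Fin (n + 1)) ℂ}
  {l m : Fin 3 → Fin (n + 1) → ℂ} {nn : Fin 2 → Fin (n + 1) → ℂ}

theorem polar_l {s : Fin 3} (h : a.mulVec (l s) = 0) (x : Fin (n + 1)) :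
    polarMap a b c x (triPt a b c (l s)) =
      ∑ i, a i x • (condRow a b c l m nn) (.inl (s, i)) := by
  ext p
  simp [polarMap, triPt, h, condRow]

theorem polar_m {s : Fin 3} (h : b.mulVec (m s) = 0) (x : Fin (n + 1)) :
    polarMap a b c x (triPt a b c (m s)) =
      ∑ j, b j x • (condRow a b c l m nn) (.inr (.inl (s, j))) := by
  ext p
  simp [polarMap, triPt, h, condRow]

theorem polar_nn {s : Fin 2} (h : c.mulVec (nn s) = 0) (x : Fin (n + 1)) :
    polarMap a b c x (triPt a b c (nn s)) =
      ∑ k, c k x • (condRow a b c l m nn) (.inr (.inr (s, k))) := by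
  ext p
  simp [polarMap, triPt, h, condRow]

/-- If the linear forms in the rows of `a` are independent, vanishing of all the combinations of
`r 0, r 1, r 2` with coefficients in the columns of `a` means vanishing of each. -/
theorem sum_smul_dot_iff (ha : ∀ y, Matrix.vecMul y a = 0 → y = 0) (r : Fin 3 → Tens) (T : Tens) :
    (∀ x, T ⬝ᵥ ∑ i, a i x • r i = 0) ↔ ∀ i, r i ⬝ᵥ T = 0 := by
  have h : ∀ x, T ⬝ᵥ ∑ i, a i x • r i = Matrix.vecMul (fun i => r i ⬝ᵥ T) a x := by
    intro x
    rw [dotProduct_sum]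
    change _ = ∑ i, (r i ⬝ᵥ T) * a i x
    refine Finset.sum_congr rfl fun i _ => ?_
    rw [dotProduct_smul, smul_eq_mul, mul_comm, dotProduct_comm]
  simp only [h]
  constructor
  · intro h0
    exact congrFun (ha _ (funext h0))
  · intro h0 x
    have h2 : (fun i => r i ⬝ᵥ T) = 0 := funext h0
    rw [h2, Matrix.zero_vecMul, Pi.zero_apply]

/-- For tensors, `condRow` expresses the conditions of being singular at the eight points. The
independence of the rows of `a` is what allows one to pass from the vanishing of the gradient
`∑ T(i, b(l), c(l)) • aᵢ` at `l` to the vanishing of its coefficients. -/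
theorem cubicForm_mem_iff {U S : Set (Fin (n + 1) → ℂ)}
    (hU : ∀ v, v ∈ U ↔ a.mulVec v = 0 ∨ b.mulVec v = 0 ∨ c.mulVec v = 0)
    (hS : S = Set.range l ∪ Set.range m ∪ Set.range nn)
    (hl : ∀ s, a.mulVec (l s) = 0) (hm : ∀ s, b.mulVec (m s) = 0) (hn : ∀ s, c.mulVec (nn s) = 0)
    (ha : ∀ y, Matrix.vecMul y a = 0 → y = 0) (hb : ∀ y, Matrix.vecMul y b = 0 → y = 0)
    (hc : ∀ y, Matrix.vecMul y c = 0 → y = 0) (T : Tens) :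
    cubicForm a b c T ∈ SingSpace n 3 S U ↔ T ∈ LinearMap.ker (condRow a b c l m nn).mulVecLin := by
  have hvan : ∀ v ∈ U, evalAt v (cubicForm a b c T) = 0 := by
    intro v hv
    rw [evalAt_cubicForm]
    refine Finset.sum_eq_zero fun p _ => ?_
    rcases (hU v).1 hv with h | h | h <;> simp [h]
  have h1 : ∀ s, SingularAt (cubicForm a b c T) (l s) ↔
      ∀ i, (condRow a b c l m nn) (.inl (s, i)) ⬝ᵥ T = 0 := fun s => by
    simp only [SingularAt, evalPDeriv_cubicForm, polar_l (m := m) (nn := nn) (hl s)]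
    exact sum_smul_dot_iff ha _ T
  have h2 : ∀ s, SingularAt (cubicForm a b c T) (m s) ↔
      ∀ i, (condRow a b c l m nn) (.inr (.inl (s, i))) ⬝ᵥ T = 0 := fun s => by
    simp only [SingularAt, evalPDeriv_cubicForm, polar_m (l := l) (nn := nn) (hm s)]
    exact sum_smul_dot_iff hb _ T
  have h3 : ∀ s, SingularAt (cubicForm a b c T) (nn s) ↔
      ∀ i, (condRow a b c l m nn) (.inr (.inr (s, i))) ⬝ᵥ T = 0 := fun s => by
    simp only [SingularAt, evalPDeriv_cubicForm, polar_nn (l := l) (m := m) (hn s)]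
    exact sum_smul_dot_iff hc _ T
  rw [mem_singSpace, hS, LinearMap.mem_ker, Matrix.mulVecLin_apply, funext_iff]
  simp only [cubicForm_isHomogeneous, true_and, Set.mem_union, or_imp,
    forall_and, Set.forall_mem_range, h1, h2, h3, Sum.forall, Prod.forall, Matrix.mulVec,
    Pi.zero_apply, and_assoc]
  exact ⟨fun h => h.2, fun h => ⟨hvan, h⟩⟩

/-- Two vectors whose tensor product is a combination of `e s ⊗ f s`, with the `e s` and the `f s`
independent, are multiples of a common pair `e s`, `f s`; only the second factor is recorded. -/
theorem exists_proportional {e f : Fin 3 → Fin 3 → ℂ} (he : LinearIndependent ℂ e)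
    (hf : LinearIndependent ℂ f) {u v : Fin 3 → ℂ} (hu : u ≠ 0) (κ : Fin 3 → ℂ)
    (h : ∀ i j, u i * v j = ∑ s, κ s * (e s i * f s j)) : ∃ s, ∃ r : ℂ, v = r • f s := by
  let E := basisOfLinearIndependentOfCardEqFinrank he (by simp)
  let F := basisOfLinearIndependentOfCardEqFinrank hf (by simp)
  have hE : ∀ s, E s = e s := fun s => by simp [E]
  have hF : ∀ s, F s = f s := fun s => by simp [F]
  have key : ∀ p q, E.repr u p * F.repr v q = if p = q then κ p else 0 := by
    intro p q
    -- apply the dual basis vectors of `E` and `F` to the two sides of `h`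
    have h1 : ∀ j, v j • u = ∑ s, (κ s * f s j) • E s := by
      intro j
      ext i
      simp only [Pi.smul_apply, smul_eq_mul, Finset.sum_apply, hE]
      rw [mul_comm, h]
      exact Finset.sum_congr rfl fun s _ => by ring
    have h2 : ∀ j, v j * E.repr u p = κ p * f p j := by
      intro j
      have := congrArg (fun w => E.repr w p) (h1 j)
      simpa [Finsupp.single_apply] using this
    have h3 : E.repr u p • v = κ p • F p := by
      ext j
      simp only [Pi.smul_apply, smul_eq_mul, hF]
      rw [mul_comm, h2]
    have := congrArg (fun w => F.repr w q) h3
    simpa [Finsupp.single_apply] using this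
  obtain ⟨p, hp⟩ : ∃ p, E.repr u p ≠ 0 := by
    by_contra! h0
    exact hu (E.repr.map_eq_zero_iff.1 (Finsupp.ext h0))
  refine ⟨p, F.repr v p, ?_⟩
  rw [← hF]
  conv_lhs => rw [← F.sum_repr v]
  refine Finset.sum_eq_single p (fun q _ hq => ?_) (by simp)
  have := key p q
  rw [if_neg hq.symm] at this
  simp [(mul_eq_zero.1 this).resolve_left hp]

/-- The triples of the eight points satisfy the linear system that `triPt q` satisfies if all the
cubics are singular at `q`. -/
theorem known_mem_ker (hl : ∀ s, a.mulVec (l s) = 0) (hm : ∀ s, b.mulVec (m s) = 0)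
    (hn : ∀ s, c.mulVec (nn s) = 0) (i : Fin 3 ⊕ Fin 3 ⊕ Fin 2) :
    ∃ μ, (triKnown a b c l m nn i, μ) ∈ LinearMap.ker (polarSys ε a b c l m nn) := by
  classical
  have key : ∀ (k : Fin 3 → CondIdx) (d : Matrix (Fin 3) (Fin (n + 1)) ℂ),
      (∀ x, polarMap a b c x (triKnown a b c l m nn i) =
        ∑ j, d j x • condRow a b c l m nn (k j)) →
      ∃ μ, (triKnown a b c l m nn i, μ) ∈ LinearMap.ker (polarSys ε a b c l m nn) := by
    intro k d h
    refine ⟨fun x => ∑ j, d j (ε x) • Pi.single (k j) 1, ?_⟩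
    rw [LinearMap.mem_ker]
    funext x
    simp [polarSys, h, Matrix.row]
  rcases i with s | s | s
  · refine key (fun j => .inl (s, j)) a fun x => ?_
    rw [← polar_l (hl s)]
    congr 1
    funext i
    fin_cases i <;> simp [triKnown, triPt, hl, Pi.zero_def]
  · refine key (fun j => .inr (.inl (s, j))) b fun x => ?_
    rw [← polar_m (hm s)]
    congr 1
    funext i
    fin_cases i <;> simp [triKnown, triPt, hm, Pi.zero_def]
  · refine key (fun j => .inr (.inr (s, j))) c fun x => ?_
    rw [← polar_nn (hn s)]
    congr 1
    funext i
    fin_cases i <;> simp [triKnown, triPt, hn, Pi.zero_def]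

/-- The conclusion of the theorem for a configuration satisfying `GoodConfig`, given by linear forms
instead of bases of the subspaces. -/
theorem goodConfig_conclusion (hg : GoodConfig ε a b c l m nn) {U S : Set (Fin (n + 1) → ℂ)}
    (hU : ∀ v, v ∈ U ↔ a.mulVec v = 0 ∨ b.mulVec v = 0 ∨ c.mulVec v = 0)
    (hS : S = Set.range l ∪ Set.range m ∪ Set.range nn)
    (hl : ∀ s, a.mulVec (l s) = 0) (hm : ∀ s, b.mulVec (m s) = 0) (hn : ∀ s, c.mulVec (nn s) = 0)
    (ha : ∀ y, Matrix.vecMul y a = 0 → y = 0) (hb : ∀ y, Matrix.vecMul y b = 0 → y = 0)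
    (hc : ∀ y, Matrix.vecMul y c = 0 → y = 0)
    (hcub : Module.finrank ℂ (SingSpace n 3 ∅ U) ≤ 27) :
    Module.finrank ℂ (SingSpace n 3 S U) = 3 ∧
      ∀ q : Fin (n + 1) → ℂ, (∀ f ∈ SingSpace n 3 S U, SingularAt f q) → q ∈ U := by
  classical
  have hmem := cubicForm_mem_iff hU hS hl hm hn ha hb hc
  -- the cubics vanishing on `U` are exactly the forms `cubicForm a b c T`
  have hrange : LinearMap.range (cubicForm a b c) = SingSpace n 3 ∅ U := by
    refine Submodule.eq_of_le_of_finrank_le ?_ ?_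
    · rintro _ ⟨T, rfl⟩
      refine mem_singSpace.2 ⟨cubicForm_isHomogeneous a b c T, fun v hv => ?_, by simp⟩
      rw [evalAt_cubicForm]
      refine Finset.sum_eq_zero fun p _ => ?_
      rcases (hU v).1 hv with h | h | h <;> simp [h]
    · rw [LinearMap.finrank_range_of_inj hg.cubic]
      simpa using hcub
  have hspace : SingSpace n 3 S U =
      (LinearMap.ker (condRow a b c l m nn).mulVecLin).map (cubicForm a b c) := by
    ext f
    rw [Submodule.mem_map]
    constructor
    · intro hf
      have h1 : f ∈ SingSpace n 3 ∅ U :=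
        mem_singSpace.2 ⟨(mem_singSpace.1 hf).1, (mem_singSpace.1 hf).2.1, by simp⟩
      rw [← hrange] at h1
      obtain ⟨T, rfl⟩ := h1
      exact ⟨T, (hmem T).1 hf, rfl⟩
    · rintro ⟨T, hT, rfl⟩
      exact (hmem T).2 hT
  constructor
  · rw [hspace, LinearEquiv.finrank_eq (Submodule.equivMapOfInjective _ hg.cubic _).symm]
    refine le_antisymm hg.cond ?_
    have h1 := (condRow a b c l m nn).mulVecLin.finrank_range_add_finrank_ker
    have h2 := Submodule.finrank_le (LinearMap.range (condRow a b c l m nn).mulVecLin)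
    rw [Module.finrank_fintype_fun_eq_card] at h1 h2
    have h3 : Fintype.card CondIdx = 24 := by simp
    have h4 : Fintype.card (Fin 3 × Fin 3 × Fin 3) = 27 := by simp
    rw [h3] at h2
    rw [h4] at h1
    have h5 := h1.symm.le.trans (Nat.add_le_add_right h2 _)
    exact Nat.le_of_add_le_add_left h5
  intro q hq
  rw [hU]
  by_contra! hne
  obtain ⟨hqa, hqb, hqc⟩ := hne
  -- `polarMap x (triPt q)` is orthogonal to the kernel of `condRow`, so it is in the row space
  have hμ : ∀ x, ∃ μ : CondIdx → ℂ,
      polarMap a b c x (triPt a b c q) = Matrix.vecMul μ (condRow a b c l m nn) := by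
    intro x
    have h1 : dotProductBilin ℂ ℂ (polarMap a b c x (triPt a b c q)) ∈ Submodule.span ℂ
        (Set.range fun k : CondIdx => dotProductBilin ℂ ℂ (condRow a b c l m nn k)) := by
      refine mem_span_of_iInf_ker_le_ker fun T hT => ?_
      have hT' : T ∈ LinearMap.ker (condRow a b c l m nn).mulVecLin := by
        rw [LinearMap.mem_ker]
        funext k
        exact (Submodule.mem_iInf _).1 hT k
      have := hq _ ((hmem T).2 hT') x
      rw [evalPDeriv_cubicForm, dotProduct_comm] at this
      exact this
    obtain ⟨μ, hμ⟩ := (Submodule.mem_span_range_iff_exists_fun ℂ).1 h1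
    refine ⟨μ, funext fun p => ?_⟩
    have hdp : ∀ v : Tens, dotProductBilin ℂ ℂ v (Pi.single p 1) = v p :=
      fun v => dotProduct_single_one v p
    have := LinearMap.congr_fun hμ (Pi.single p 1)
    rw [LinearMap.sum_apply] at this
    simp only [LinearMap.smul_apply, hdp] at this
    exact this.symm
  choose μ hμ using hμ
  -- hence `triPt q` is a combination of the eight known points
  have hspan : ∃ κ : Fin 3 ⊕ Fin 3 ⊕ Fin 2 → ℂ,
      triPt a b c q = ∑ i, κ i • triKnown a b c l m nn i := by
    choose ν hν using known_mem_ker (ε := ε) hl hm hn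
    have hind : LinearIndependent ℂ fun i =>
        (⟨_, hν i⟩ : LinearMap.ker (polarSys ε a b c l m nn)) := by
      refine LinearIndependent.of_comp (LinearMap.fst ℂ _ _ ∘ₗ Submodule.subtype _) ?_
      exact hg.known
    have htop := hind.span_eq_top_of_card_eq_finrank' (le_antisymm
      (hind.fintype_card_le_finrank) (by simpa using hg.polar))
    have hq' : (triPt a b c q, fun x => μ (ε x)) ∈ LinearMap.ker (polarSys ε a b c l m nn) := by
      rw [LinearMap.mem_ker]
      funext x
      simp [polarSys, hμ]
    have h1 : (⟨_, hq'⟩ : LinearMap.ker (polarSys ε a b c l m nn)) ∈ Submodule.span ℂ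
        (Set.range fun i => (⟨_, hν i⟩ : LinearMap.ker (polarSys ε a b c l m nn))) := by
      rw [htop]; trivial
    obtain ⟨κ, hκ⟩ := (Submodule.mem_span_range_iff_exists_fun ℂ).1 h1
    refine ⟨κ, ?_⟩
    have := congrArg (LinearMap.fst ℂ _ _ ∘ₗ Submodule.subtype _) hκ
    rw [map_sum] at this
    exact this.symm
  obtain ⟨κ, hκ⟩ := hspan
  obtain ⟨s, r, hr⟩ := exists_proportional hg.bl hg.cl hqb (fun s => κ (.inl s)) fun i j => by
    have := congrFun (congrFun (congrFun hκ 0) i) j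
    simpa [triPt, triKnown, Finset.sum_apply] using this
  obtain ⟨s', r', hr'⟩ := exists_proportional hg.am hg.cm hqa (fun s => κ (.inr (.inl s)))
    fun i j => by
      have := congrFun (congrFun (congrFun hκ 1) i) j
      simpa [triPt, triKnown, Finset.sum_apply] using this
  have h1 := LinearIndependent.pair_iff.1 (hg.clm s s') r (-r') (by
    rw [← hr, neg_smul, ← hr', add_neg_cancel])
  exact hqc (by rw [hr, h1.1, zero_smul])

end Conclusion

/-! ### Openness of the conditions and passage to kernels of linear forms -/

section Openness

theorem eventually_goodConfig {ι : Type*} {n : ℕ} {ε : Fin 7 → Fin (n + 1)}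
    {a b c : (ι → ℂ) → Matrix (Fin 3) (Fin (n + 1)) ℂ}
    {l m : (ι → ℂ) → Fin 3 → Fin (n + 1) → ℂ} {nn : (ι → ℂ) → Fin 2 → Fin (n + 1) → ℂ} {t₀ : ι → ℂ}
    (ha : ∀ i x, (fun t => a t i x) ∈ PolyFam ι ℂ) (hb : ∀ i x, (fun t => b t i x) ∈ PolyFam ι ℂ)
    (hc : ∀ i x, (fun t => c t i x) ∈ PolyFam ι ℂ) (hl : ∀ s x, (fun t => l t s x) ∈ PolyFam ι ℂ)
    (hm : ∀ s x, (fun t => m t s x) ∈ PolyFam ι ℂ) (hn : ∀ s x, (fun t => nn t s x) ∈ PolyFam ι ℂ)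
    (h : GoodConfig ε (a t₀) (b t₀) (c t₀) (l t₀) (m t₀) (nn t₀)) :
    ∀ᶠ t in zNhds t₀, GoodConfig ε (a t) (b t) (c t) (l t) (m t) (nn t) := by
  have hmv : ∀ {d : (ι → ℂ) → Matrix (Fin 3) (Fin (n + 1)) ℂ} {v : (ι → ℂ) → Fin (n + 1) → ℂ}
      (_ : ∀ i x, (fun t => d t i x) ∈ PolyFam ι ℂ) (_ : ∀ x, (fun t => v t x) ∈ PolyFam ι ℂ)
      (i : Fin 3), (fun t => (d t).mulVec (v t) i) ∈ PolyFam ι ℂ := by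
    intro d v hd hv i
    simp only [Matrix.mulVec, dotProduct]
    exact pf_sum _ fun x _ => pf_mul (hd i x) (hv x)
  have hlin : ∀ {d : (ι → ℂ) → Matrix (Fin 3) (Fin (n + 1)) ℂ}
      (_ : ∀ i x, (fun t => d t i x) ∈ PolyFam ι ℂ) (i : Fin 3),
      (fun t => linForm (d t i)) ∈ PolyFam ι (MvPolynomial (Fin (n + 1)) ℂ) := by
    intro d hd i
    simp only [linForm, ← smul_eq_C_mul]
    exact pf_sum _ fun x _ => pf_smul (hd i x) (pf_const _)
  have hrow : ∀ k p, (fun t => condRow (a t) (b t) (c t) (l t) (m t) (nn t) k p) ∈ PolyFam ι ℂ := by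
    have hite : ∀ (P : Prop) [Decidable P] {f : (ι → ℂ) → ℂ}, f ∈ PolyFam ι ℂ →
        (fun t => if P then f t else 0) ∈ PolyFam ι ℂ := by
      intro P _ f hf
      split_ifs
      exacts [hf, pf_const 0]
    rintro (⟨s, i⟩ | ⟨s, i⟩ | ⟨s, i⟩) p <;> refine hite _ (pf_mul ?_ ?_)
    exacts [hmv hb (hl s) _, hmv hc (hl s) _, hmv ha (hm s) _, hmv hc (hm s) _,
      hmv ha (hn s) _, hmv hb (hn s) _]
  have h1 := eventually_injective (Λ := fun t => cubicForm (a t) (b t) (c t)) (fun T => by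
    simp only [cubicForm_apply]
    exact pf_sum _ fun p _ => pf_csmul (T p)
      (pf_mul (pf_mul (hlin ha _) (hlin hb _)) (hlin hc _))) h.cubic
  have h2 := eventually_finrank_ker_le
    (Λ := fun t => (condRow (a t) (b t) (c t) (l t) (m t) (nn t)).mulVecLin) (fun T => by
      refine pf_pi fun k => ?_
      simp only [Matrix.mulVecLin_apply, Matrix.mulVec, dotProduct]
      exact pf_sum _ fun p _ => pf_mul (hrow k p) (pf_const (T p))) h.cond
  have h3 := eventually_finrank_ker_le
    (Λ := fun t => polarSys ε (a t) (b t) (c t) (l t) (m t) (nn t)) (fun v => by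
      refine pf_pi fun x => pf_pi fun p => ?_
      refine pf_sub (pf_add (pf_add ?_ ?_) ?_) ?_
      · exact pf_mul (ha _ _) (pf_const _)
      · exact pf_mul (hb _ _) (pf_const _)
      · exact pf_mul (hc _ _) (pf_const _)
      · change (fun t => ∑ k, v.2 x k * condRow (a t) (b t) (c t) (l t) (m t) (nn t) k p) ∈ _
        exact pf_sum _ fun k _ => pf_mul (pf_const (v.2 x k)) (hrow k p)) h.polar
  have h4 := eventually_linearIndependent
    (w := fun t => triKnown (a t) (b t) (c t) (l t) (m t) (nn t)) (fun k => by
      refine pf_pi fun r => pf_pi fun i => pf_pi fun j => ?_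
      rcases k with s | s | s <;> fin_cases r <;> first
        | exact pf_const 0
        | exact pf_mul (hmv hb (hl s) _) (hmv hc (hl s) _)
        | exact pf_mul (hmv ha (hm s) _) (hmv hc (hm s) _)
        | exact pf_mul (hmv ha (hn s) _) (hmv hb (hn s) _)) h.known
  have h5 := eventually_linearIndependent (w := fun t s => (b t).mulVec (l t s))
    (fun s => pf_pi fun i => hmv hb (hl s) i) h.bl
  have h6 := eventually_linearIndependent (w := fun t s => (c t).mulVec (l t s))
    (fun s => pf_pi fun i => hmv hc (hl s) i) h.cl
  have h7 := eventually_linearIndependent (w := fun t s => (a t).mulVec (m t s))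
    (fun s => pf_pi fun i => hmv ha (hm s) i) h.am
  have h8 := eventually_linearIndependent (w := fun t s => (c t).mulVec (m t s))
    (fun s => pf_pi fun i => hmv hc (hm s) i) h.cm
  have h9 : ∀ᶠ t in zNhds t₀, ∀ s r,
      LinearIndependent ℂ ![(c t).mulVec (l t s), (c t).mulVec (m t r)] := by
    refine Filter.eventually_all.2 fun s => Filter.eventually_all.2 fun r => ?_
    refine eventually_linearIndependent
      (w := fun t => ![(c t).mulVec (l t s), (c t).mulVec (m t r)]) (fun k => ?_) (h.clm s r)
    fin_cases k
    exacts [pf_pi fun i => hmv hc (hl s) i, pf_pi fun i => hmv hc (hm r) i]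
  filter_upwards [h1, h2, h3, h4, h5, h6, h7, h8, h9] with t h1 h2 h3 h4 h5 h6 h7 h8 h9
  exact ⟨h1, h2, h3, h4, h5, h6, h7, h8, h9⟩

/-- A surjective `3 × (n + 1)` matrix `a₀` extends to a polynomial family: to each matrix `A` near
a basis matrix `A₀` of `ker a₀` one can attach linear forms `form A`, polynomial in `A`, whose
common kernel is the column span of `A`. The rows of `form A` are rows of the adjugate of the
square matrix obtained from `A` by adding as columns a fixed right inverse of `a₀`. -/
theorem exists_form {n : ℕ} (hn : 2 ≤ n) (a₀ : Matrix (Fin 3) (Fin (n + 1)) ℂ)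
    (E : Matrix (Fin (n + 1)) (Fin 3) ℂ) (hE : a₀ * E = 1) :
    ∃ (A₀ : Matrix (Fin (n + 1)) (Fin (n - 2)) ℂ)
      (form : Matrix (Fin (n + 1)) (Fin (n - 2)) ℂ → Matrix (Fin 3) (Fin (n + 1)) ℂ)
      (d : Matrix (Fin (n + 1)) (Fin (n - 2)) ℂ → ℂ),
      form A₀ = a₀ ∧ d A₀ ≠ 0 ∧
      (∀ (ι : Type) (A : (ι → ℂ) → Matrix (Fin (n + 1)) (Fin (n - 2)) ℂ),
        (∀ i j, (fun t => A t i j) ∈ PolyFam ι ℂ) →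
          (fun t => d (A t)) ∈ PolyFam ι ℂ ∧ ∀ i x, (fun t => form (A t) i x) ∈ PolyFam ι ℂ) ∧
      ∀ A, d A ≠ 0 → Function.Injective A.mulVec ∧
        (∀ v, v ∈ Set.range A.mulVec ↔ (form A).mulVec v = 0) ∧
        ∀ y, Matrix.vecMul y (form A) = 0 → y = 0 := by
  classical
  have hsurj : Function.Surjective a₀.mulVecLin := fun w =>
    ⟨E.mulVec w, by simp [Matrix.mulVec_mulVec, hE]⟩
  have hrank : Module.finrank ℂ (LinearMap.ker a₀.mulVecLin) = n - 2 := by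
    have h1 := a₀.mulVecLin.finrank_range_add_finrank_ker
    rw [LinearMap.range_eq_top.2 hsurj, finrank_top, Module.finrank_fintype_fun_eq_card,
      Module.finrank_fintype_fun_eq_card, Fintype.card_fin, Fintype.card_fin] at h1
    omega
  let B := Module.finBasisOfFinrankEq ℂ _ hrank
  let A₀ : Matrix (Fin (n + 1)) (Fin (n - 2)) ℂ := Matrix.of fun i j => (B j : Fin (n + 1) → ℂ) i
  have hA₀ : ∀ u, A₀.mulVec u = ((∑ j, u j • B j : LinearMap.ker a₀.mulVecLin) : Fin (n + 1) → ℂ) := by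
    intro u
    ext i
    simp [A₀, Matrix.mulVec, dotProduct, mul_comm]
  have haA : ∀ u, a₀.mulVec (A₀.mulVec u) = 0 := fun u => by
    rw [hA₀]
    exact (∑ j, u j • B j : LinearMap.ker a₀.mulVecLin).2
  let e : Fin (n - 2) ⊕ Fin 3 ≃ Fin (n + 1) :=
    finSumFinEquiv.trans (finCongr (by omega))
  let S : Matrix (Fin (n + 1)) (Fin (n - 2)) ℂ →
      Matrix (Fin (n - 2) ⊕ Fin 3) (Fin (n - 2) ⊕ Fin 3) ℂ :=
    fun A => (Matrix.fromCols A E).submatrix e id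
  have hS : ∀ A (w : Fin (n - 2) ⊕ Fin 3 → ℂ), (S A).mulVec w =
      (A.mulVec (w ∘ Sum.inl) + E.mulVec (w ∘ Sum.inr)) ∘ e := by
    intro A w
    ext i
    simp [S, Matrix.mulVec, dotProduct, Fintype.sum_sum_type]
  have hadj : ∀ A (w : Fin (n - 2) ⊕ Fin 3 → ℂ),
      (S A).adjugate.mulVec ((S A).mulVec w) = (S A).det • w := by
    intro A w
    rw [Matrix.mulVec_mulVec, Matrix.adjugate_mul, Matrix.smul_mulVec, Matrix.one_mulVec]
  have hadj' : ∀ A (w : Fin (n - 2) ⊕ Fin 3 → ℂ),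
      (S A).mulVec ((S A).adjugate.mulVec w) = (S A).det • w := by
    intro A w
    rw [Matrix.mulVec_mulVec, Matrix.mul_adjugate, Matrix.smul_mulVec, Matrix.one_mulVec]
  let d₀ := (S A₀).det
  let form : Matrix (Fin (n + 1)) (Fin (n - 2)) ℂ → Matrix (Fin 3) (Fin (n + 1)) ℂ :=
    fun A => Matrix.of fun i x => d₀⁻¹ * (S A).adjugate (.inr i) (e.symm x)
  have hform : ∀ A v, (form A).mulVec v = d₀⁻¹ • (((S A).adjugate.mulVec (v ∘ e)) ∘ Sum.inr) := by
    intro A v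
    ext i
    simp only [form, Matrix.mulVec, dotProduct, Matrix.of_apply, Pi.smul_apply, smul_eq_mul,
      Function.comp_apply, Finset.mul_sum, mul_assoc]
    rw [← e.sum_comp]
    simp
  have hd₀ : d₀ ≠ 0 := by
    rw [← isUnit_iff_ne_zero, ← Matrix.isUnit_iff_isUnit_det, ← Matrix.mulVec_injective_iff_isUnit]
    intro w w' hww
    rw [← sub_eq_zero] at hww ⊢
    rw [← Matrix.mulVec_sub] at hww
    generalize w - w' = u at hww ⊢
    rw [hS] at hww
    have h0 : A₀.mulVec (u ∘ Sum.inl) + E.mulVec (u ∘ Sum.inr) = 0 := by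
      have := congrArg (fun f => f ∘ e.symm) hww
      simpa [Function.comp_assoc] using this
    have h1 : u ∘ Sum.inr = 0 := by
      have := congrArg a₀.mulVec h0
      simpa [Matrix.mulVec_add, haA, Matrix.mulVec_mulVec, hE] using this
    have h2 : u ∘ Sum.inl = 0 := by
      rw [h1, Matrix.mulVec_zero, add_zero, hA₀] at h0
      funext j
      exact Fintype.linearIndependent_iff.1 B.linearIndependent _ (Subtype.ext h0) j
    ext (j | j)
    exacts [congrFun h2 j, congrFun h1 j]
  refine ⟨A₀, form, fun A => (S A).det, ?_, hd₀, fun ι A hA => ?_, fun A hd => ⟨?_, ?_, ?_⟩⟩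
  · have key : ∀ v, (form A₀).mulVec v = a₀.mulVec v := by
      intro v
      have h1 := hadj' A₀ (v ∘ e)
      rw [hS] at h1
      have h2 := congrArg (fun f => a₀.mulVec (f ∘ e.symm)) h1
      simp only [Function.comp_assoc, Equiv.self_comp_symm, Function.comp_id, Matrix.mulVec_add,
        haA, Matrix.mulVec_mulVec, hE, Matrix.one_mulVec, zero_add] at h2
      rw [hform, h2]
      change d₀⁻¹ • a₀.mulVec (d₀ • v ∘ e ∘ e.symm) = _
      rw [Equiv.self_comp_symm, Function.comp_id, Matrix.mulVec_smul, smul_smul,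
        inv_mul_cancel₀ hd₀, one_smul]
    ext i x
    have := congrFun (key (Pi.single x 1)) i
    simpa using this
  · have hSA : ∀ i j, (fun t => S (A t) i j) ∈ PolyFam ι ℂ := by
      rintro i (j | j)
      exacts [hA _ _, pf_const _]
    exact ⟨pf_det hSA, fun i x => pf_mul (pf_const _) (pf_adjugate hSA _ _)⟩
  · intro u u' huu
    have h1 : ∀ u : Fin (n - 2) → ℂ, (S A).mulVec (Sum.elim u 0) = A.mulVec u ∘ e := by
      intro u
      simp [hS]
    have h2 := hadj A (Sum.elim u 0)
    rw [h1, huu, ← h1, hadj] at h2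
    have h3 := smul_right_injective _ hd h2
    exact (congrArg (fun f => f ∘ Sum.inl) h3).symm
  · intro v
    rw [hform]
    constructor
    · rintro ⟨u, rfl⟩
      have h1 : (S A).mulVec (Sum.elim u 0) = A.mulVec u ∘ e := by simp [hS]
      rw [← h1, hadj]
      ext i
      simp
    · intro h
      have h0 : (S A).adjugate.mulVec (v ∘ e) ∘ Sum.inr = 0 :=
        (smul_eq_zero.1 h).resolve_left (inv_ne_zero hd₀)
      have h1 := hadj' A (v ∘ e)
      rw [hS, h0, Matrix.mulVec_zero, add_zero] at h1
      refine ⟨(S A).det⁻¹ • ((S A).adjugate.mulVec (v ∘ e) ∘ Sum.inl), ?_⟩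
      have h2 := congrArg (fun f => f ∘ e.symm) h1
      simp only [Function.comp_assoc, Equiv.self_comp_symm, Function.comp_id] at h2
      rw [Matrix.mulVec_smul, h2]
      change (S A).det⁻¹ • (S A).det • v ∘ e ∘ e.symm = v
      rw [Equiv.self_comp_symm, Function.comp_id, smul_smul, inv_mul_cancel₀ hd, one_smul]
  · intro y hy
    have h1 : ∀ w, (form A).mulVec (E.mulVec w) = (d₀⁻¹ * (S A).det) • w := by
      intro w
      have h2 : (S A).mulVec (Sum.elim 0 w) = E.mulVec w ∘ e := by simp [hS]
      rw [hform, ← h2, hadj]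
      ext i
      simp [mul_assoc]
    funext i
    have h2 : y ⬝ᵥ (form A).mulVec (E.mulVec (Pi.single i 1)) = 0 := by
      rw [Matrix.dotProduct_mulVec, hy, zero_dotProduct]
    rw [h1, dotProduct_smul, dotProduct_single_one, smul_eq_mul] at h2
    exact (mul_eq_zero.1 h2).resolve_left (mul_ne_zero (inv_ne_zero hd₀) hd)

/-- The restriction of a cubic to the column spans of `A 0`, `A 1`, `A 2`, as a triple of
polynomials in the coordinates on these spans. -/
noncomputable def restrictMap {n r : ℕ} (A : Fin 3 → Matrix (Fin (n + 1)) (Fin r) ℂ) :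
    homogeneousSubmodule (Fin (n + 1)) ℂ 3 →ₗ[ℂ] (Fin 3 → MvPolynomial (Fin r) ℂ) :=
  LinearMap.pi fun k =>
    (aeval fun i => ∑ j, A k i j • X (R := ℂ) j).toLinearMap ∘ₗ Submodule.subtype _

theorem map_ker_restrictMap {n r : ℕ} (A : Fin 3 → Matrix (Fin (n + 1)) (Fin r) ℂ) :
    (LinearMap.ker (restrictMap A)).map (Submodule.subtype _) = SingSpace n 3 ∅
      (Set.range (A 0).mulVec ∪ Set.range (A 1).mulVec ∪ Set.range (A 2).mulVec) := by
  have key : ∀ (k : Fin 3) (f : MvPolynomial (Fin (n + 1)) ℂ),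
      aeval (fun i => ∑ j, A k i j • X (R := ℂ) j) f = 0 ↔
        ∀ u, evalAt ((A k).mulVec u) f = 0 := by
    intro k f
    have h : ∀ u, evalAt ((A k).mulVec u) f =
        eval u (aeval (fun i => ∑ j, A k i j • X (R := ℂ) j) f) := by
      intro u
      have h1 : aeval ((A k).mulVec u) =
          (aeval u).comp (aeval (R := ℂ) fun i => ∑ j, A k i j • X (R := ℂ) j) := by
        ext i
        simp [Matrix.mulVec, dotProduct]
      exact DFunLike.congr_fun h1 f
    simp only [h]
    exact ⟨fun h u => by rw [h, map_zero], fun h => MvPolynomial.funext fun u => by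
      rw [h, map_zero]⟩
  ext f
  rw [mem_singSpace, Submodule.mem_map]
  simp only [Set.mem_union, or_imp, forall_and, Set.forall_mem_range, ← key]
  constructor
  · rintro ⟨⟨f, hf⟩, h, rfl⟩
    have h' := fun k => congrFun (LinearMap.mem_ker.1 h) k
    exact ⟨hf, ⟨⟨h' 0, h' 1⟩, h' 2⟩, by simp⟩
  · rintro ⟨hf, ⟨⟨h0, h1⟩, h2⟩, -⟩
    refine ⟨⟨f, hf⟩, LinearMap.mem_ker.2 (funext fun k => ?_), rfl⟩
    fin_cases k
    exacts [h0, h1, h2]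

/-- The dimension of the space of cubics vanishing on three subspaces is upper semicontinuous, since
this space is the kernel of the restriction map. -/
theorem eventually_finrank_singSpace_le {ι : Type*} {n r k : ℕ} {t₀ : ι → ℂ}
    {A : (ι → ℂ) → Fin 3 → Matrix (Fin (n + 1)) (Fin r) ℂ}
    (hA : ∀ k i j, (fun t => A t k i j) ∈ PolyFam ι ℂ)
    (h : Module.finrank ℂ (SingSpace n 3 ∅ (Set.range (A t₀ 0).mulVec ∪
      Set.range (A t₀ 1).mulVec ∪ Set.range (A t₀ 2).mulVec)) ≤ k) :
    ∀ᶠ t in zNhds t₀, Module.finrank ℂ (SingSpace n 3 ∅ (Set.range (A t 0).mulVec ∪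
      Set.range (A t 1).mulVec ∪ Set.range (A t 2).mulVec)) ≤ k := by
  have hfin : ∀ t, Module.finrank ℂ (SingSpace n 3 ∅ (Set.range (A t 0).mulVec ∪
      Set.range (A t 1).mulVec ∪ Set.range (A t 2).mulVec)) =
        Module.finrank ℂ (LinearMap.ker (restrictMap (A t))) := by
    intro t
    rw [← map_ker_restrictMap]
    exact (Submodule.equivMapOfInjective _ (Submodule.injective_subtype _) _).symm.finrank_eq
  simp only [hfin] at h ⊢
  refine eventually_finrank_ker_le (Λ := fun t => restrictMap (A t)) (fun f => ?_) h
  refine pf_pi fun k => pf_aeval (fun i => ?_) f.1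
  exact pf_sum _ fun j _ => pf_smul (hA k i j) (pf_const _)

/-- It suffices to check the open conditions for a single configuration. The matrices `E k` are right
inverses witnessing the independence of the linear forms in the rows of `a k`. -/
theorem generic_of_goodConfig (n : ℕ) (hn : 6 ≤ n) {ε : Fin 7 → Fin (n + 1)}
    (a : Fin 3 → Matrix (Fin 3) (Fin (n + 1)) ℂ) (E : Fin 3 → Matrix (Fin (n + 1)) (Fin 3) ℂ)
    (hE : ∀ k, a k * E k = 1) {l₀ m₀ : Fin 3 → Fin (n + 1) → ℂ} {n₀ : Fin 2 → Fin (n + 1) → ℂ}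
    (hl : ∀ s, (a 0).mulVec (l₀ s) = 0) (hm : ∀ s, (a 1).mulVec (m₀ s) = 0)
    (hnn : ∀ s, (a 2).mulVec (n₀ s) = 0) (hg : GoodConfig ε (a 0) (a 1) (a 2) l₀ m₀ n₀)
    (hcub : Module.finrank ℂ (SingSpace n 3 ∅
      {v | (a 0).mulVec v = 0 ∨ (a 1).mulVec v = 0 ∨ (a 2).mulVec v = 0}) ≤ 27) :
    Generic
      (ι := (Fin 3 × Fin (n + 1) × Fin (n - 2)) ⊕ (Fin 3 × Fin (n - 2)) ⊕
        (Fin 3 × Fin (n - 2)) ⊕ (Fin 2 × Fin (n - 2))) fun t =>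
      let A : Fin 3 → Matrix (Fin (n + 1)) (Fin (n - 2)) ℂ :=
        fun k => Matrix.of fun i j => t (Sum.inl (k, i, j))
      let l : Fin 3 → Fin (n + 1) → ℂ :=
        fun s => (A 0).mulVec fun j => t (Sum.inr (Sum.inl (s, j)))
      let m : Fin 3 → Fin (n + 1) → ℂ :=
        fun s => (A 1).mulVec fun j => t (Sum.inr (Sum.inr (Sum.inl (s, j))))
      let nn : Fin 2 → Fin (n + 1) → ℂ :=
        fun s => (A 2).mulVec fun j => t (Sum.inr (Sum.inr (Sum.inr (s, j))))
      let U : Set (Fin (n + 1) → ℂ) :=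
        Set.range (A 0).mulVec ∪ Set.range (A 1).mulVec ∪ Set.range (A 2).mulVec
      let S : Set (Fin (n + 1) → ℂ) := Set.range l ∪ Set.range m ∪ Set.range nn
      (∀ k, Function.Injective (A k).mulVec) ∧
      Module.finrank ℂ (SingSpace n 3 S U) = 3 ∧
      ∀ q : Fin (n + 1) → ℂ, q ≠ 0 →
        (∀ f ∈ SingSpace n 3 S U, SingularAt f q) → q ∈ U := by
  choose A₀ form d hform hd hpoly hspec using
    fun k => exists_form (by omega : 2 ≤ n) (a k) (E k) (hE k)
  have hpt : ∀ {k : Fin 3} {v : Fin (n + 1) → ℂ}, (a k).mulVec v = 0 →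
      ∃ u, (A₀ k).mulVec u = v := by
    intro k v hv
    rw [← hform k] at hv
    exact ((hspec k _ (hd k)).2.1 v).2 hv
  choose ul hul using fun s => hpt (hl s)
  choose um hum using fun s => hpt (hm s)
  choose un hun using fun s => hpt (hnn s)
  let ι := (Fin 3 × Fin (n + 1) × Fin (n - 2)) ⊕ (Fin 3 × Fin (n - 2)) ⊕
        (Fin 3 × Fin (n - 2)) ⊕ (Fin 2 × Fin (n - 2))
  let t₀ : ι → ℂ := Sum.elim (fun x => A₀ x.1 x.2.1 x.2.2)
    (Sum.elim (fun x => ul x.1 x.2) (Sum.elim (fun x => um x.1 x.2) fun x => un x.1 x.2))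
  let A : (ι → ℂ) → Fin 3 → Matrix (Fin (n + 1)) (Fin (n - 2)) ℂ :=
    fun t k => Matrix.of fun i j => t (Sum.inl (k, i, j))
  let l : (ι → ℂ) → Fin 3 → Fin (n + 1) → ℂ :=
    fun t s => (A t 0).mulVec fun j => t (Sum.inr (Sum.inl (s, j)))
  let m : (ι → ℂ) → Fin 3 → Fin (n + 1) → ℂ :=
    fun t s => (A t 1).mulVec fun j => t (Sum.inr (Sum.inr (Sum.inl (s, j))))
  let nn : (ι → ℂ) → Fin 2 → Fin (n + 1) → ℂ :=
    fun t s => (A t 2).mulVec fun j => t (Sum.inr (Sum.inr (Sum.inr (s, j))))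
  have hA : ∀ k i j, (fun t => A t k i j) ∈ PolyFam ι ℂ := fun k i j => pf_coord _
  have hA0 : ∀ k, A t₀ k = A₀ k := fun k => rfl
  have hev : ∀ᶠ t in zNhds t₀, (∀ k, d k (A t k) ≠ 0) ∧
      Module.finrank ℂ (SingSpace n 3 ∅ (Set.range (A t 0).mulVec ∪
        Set.range (A t 1).mulVec ∪ Set.range (A t 2).mulVec)) ≤ 27 ∧
      GoodConfig ε (form 0 (A t 0)) (form 1 (A t 1)) (form 2 (A t 2)) (l t) (m t) (nn t) := by
    have hf : ∀ k i x, (fun t => form k (A t k) i x) ∈ PolyFam ι ℂ :=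
      fun k => ((hpoly k ι (fun t => A t k)) (hA k)).2
    refine (Filter.eventually_all.2 fun k => ?_).and (Filter.Eventually.and ?_ ?_)
    · exact eventually_ne_zero ((hpoly k ι (fun t => A t k)) (hA k)).1 (hd k)
    · refine eventually_finrank_singSpace_le hA ?_
      have hset : Set.range (A t₀ 0).mulVec ∪ Set.range (A t₀ 1).mulVec ∪
          Set.range (A t₀ 2).mulVec =
          {v | (a 0).mulVec v = 0 ∨ (a 1).mulVec v = 0 ∨ (a 2).mulVec v = 0} := by
        ext v
        simp only [Set.mem_union, hA0, (hspec _ _ (hd _)).2.1 v, hform, or_assoc,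
          Set.mem_ofPred_eq]
      rw [hset]
      exact hcub
    · refine eventually_goodConfig (hf 0) (hf 1) (hf 2) ?_ ?_ ?_ ?_
      · exact fun s x => pf_sum (w := fun j t => A t 0 x j * t (.inr (.inl (s, j)))) Finset.univ
          fun j _ => pf_mul (hA _ _ _) (pf_coord _)
      · exact fun s x => pf_sum (w := fun j t => A t 1 x j * t (.inr (.inr (.inl (s, j)))))
          Finset.univ fun j _ => pf_mul (hA _ _ _) (pf_coord _)
      · exact fun s x => pf_sum (w := fun j t => A t 2 x j * t (.inr (.inr (.inr (s, j)))))
          Finset.univ fun j _ => pf_mul (hA _ _ _) (pf_coord _)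
      · have h1 : l t₀ = l₀ := funext hul
        have h2 : m t₀ = m₀ := funext hum
        have h3 : nn t₀ = n₀ := funext hun
        rw [h1, h2, h3, hA0, hA0, hA0, hform, hform, hform]
        exact hg
  obtain ⟨F, hF, hF'⟩ := eventually_zNhds.1 hev
  refine ⟨F, fun h0 => hF (by rw [h0, map_zero]), fun t ht => ?_⟩
  obtain ⟨hd, hc, hg⟩ := hF' t ht
  have hk := fun k v => (hspec k _ (hd k)).2.1 v
  have hself : ∀ k u, (form k (A t k)).mulVec ((A t k).mulVec u) = 0 :=
    fun k u => (hk k _).1 ⟨u, rfl⟩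
  obtain ⟨h1, h2⟩ := goodConfig_conclusion hg (U := Set.range (A t 0).mulVec ∪
    Set.range (A t 1).mulVec ∪ Set.range (A t 2).mulVec) (fun v => by
      simp only [Set.mem_union, hk, or_assoc]) rfl (fun s => hself _ _) (fun s => hself _ _)
      (fun s => hself _ _) (hspec 0 _ (hd 0)).2.2 (hspec 1 _ (hd 1)).2.2 (hspec 2 _ (hd 2)).2.2 hc
  exact ⟨fun k => (hspec k _ (hd k)).1, h1, fun q _ => h2 q⟩

end Openness

/-! ### A configuration satisfying the open conditions -/

section Reference

/-- The coordinate function with index `k`, evaluated at the basis vector with index `x`. -/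
noncomputable def dl (k x : ℕ) : ℂ := if x = k then 1 else 0

/-- The coefficients of the nine linear forms `x₂, x₅, x₆`; `x₁, x₃, x₄`;
`x₀, x₃ - x₅, x₄ - x₆ + x₇`. For `n = 6` there is no `x₇`, and the last form is `x₄ - x₆`. -/
noncomputable def refCoeff : Fin 3 → Fin 3 → ℕ → ℂ :=
  ![![dl 2, dl 5, dl 6], ![dl 1, dl 3, dl 4],
    ![dl 0, fun x => dl 3 x - dl 5 x, fun x => dl 4 x - dl 6 x + dl 7 x]]

/-- The three triples of linear forms with coefficients `refCoeff`. -/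
noncomputable def refForm (n : ℕ) (k : Fin 3) : Matrix (Fin 3) (Fin (n + 1)) ℂ :=
  Matrix.of fun i x => refCoeff k i x.val

/-- The values of the linear forms `refForm` at a point with coordinates `w`, followed by zeros. -/
def refVal (k : Fin 3) (w : Fin 7 → ℂ) : Fin 3 → ℂ :=
  ![![w 2, w 5, w 6], ![w 1, w 3, w 4], ![w 0, w 3 - w 5, w 4 - w 6]] k

/-- The point with coordinates `w`, followed by zeros. -/
def refPt (n : ℕ) (w : Fin 7 → ℂ) : Fin (n + 1) → ℂ :=
  fun x => if h : x.val < 7 then w ⟨x.val, h⟩ else 0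

/-- The embedding of the indices `0, …, 6`. -/
def refEps {n : ℕ} (hn : 6 ≤ n) : Fin 7 → Fin (n + 1) := Fin.castLE (by omega)

theorem sum_dl_mul_refPt {n : ℕ} (hn : 6 ≤ n) (k : Fin 7) (w : Fin 7 → ℂ) :
    ∑ x : Fin (n + 1), dl k x.val * refPt n w x = w k := by
  rw [Finset.sum_eq_single (refEps hn k)]
  · simp [dl, refPt, refEps]
  · intro x _ hx
    have : x.val ≠ k.val := fun h => hx (Fin.ext h)
    simp [dl, this]
  · simp

theorem refForm_mulVec {n : ℕ} (hn : 6 ≤ n) (k : Fin 3) (w : Fin 7 → ℂ) :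
    (refForm n k).mulVec (refPt n w) = refVal k w := by
  have h7 : ∑ x : Fin (n + 1), dl 7 x.val * refPt n w x = 0 := by
    refine Finset.sum_eq_zero fun x _ => ?_
    by_cases h : x.val = 7 <;> simp [dl, refPt, h]
  have h := sum_dl_mul_refPt hn (w := w)
  have h0 := h 0
  have h1 := h 1
  have h2 := h 2
  have h3 := h 3
  have h4 := h 4
  have h5 := h 5
  have h6 := h 6
  simp only [Fin.isValue, Fin.coe_ofNat_eq_mod, Nat.reduceMod] at h0 h1 h2 h3 h4 h5 h6
  ext i
  fin_cases k <;> fin_cases i <;>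
    simp [refForm, refVal, refCoeff, Matrix.mulVec, dotProduct, add_mul, sub_mul,
      Finset.sum_add_distrib, Finset.sum_sub_distrib, h0, h1, h2, h3, h4, h5, h6, h7]

theorem refForm_refEps {n : ℕ} (hn : 6 ≤ n) (k i : Fin 3) (x : Fin 7) :
    refForm n k i (refEps hn x) = refVal k (fun y => if x = y then 1 else 0) i := by
  have hv : (refEps hn x).val = x.val := rfl
  simp only [refForm, Matrix.of_apply, hv]
  fin_cases x <;> fin_cases k <;> fin_cases i <;> simp [refVal, refCoeff, dl]

/-- The coordinates of the points `l s`, `m s`, `nn s` of the reference configuration. -/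
def refPts : Fin 3 → Fin 3 → Fin 7 → ℂ :=
  ![![![1, 0, 0, 0, 1, 0, 0], ![2, -1, 0, 0, 0, 0, 0], ![1, 0, 0, 1, 1, 0, 0]],
    ![![1, 0, 2, 0, 0, 2, 0], ![0, 0, 1, 0, 0, 1, 1], ![-1, 0, 0, 0, 0, 1, 2]],
    ![![0, 0, 0, 1, 0, 1, 0], ![0, -1, 0, -1, 1, -1, 1], ![0, 0, 0, 0, 0, 0, 0]]]

/-- The matrix `condRow` of the reference configuration. -/
noncomputable abbrev refRow (n : ℕ) : Matrix CondIdx (Fin 3 × Fin 3 × Fin 3) ℂ :=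
  condRow (refForm n 0) (refForm n 1) (refForm n 2) (fun s => refPt n (refPts 0 s))
    (fun s => refPt n (refPts 1 s)) fun s => refPt n (refPts 2 s.castSucc)

theorem refRow_dot_l {n : ℕ} (hn : 6 ≤ n) (T : Tens) (s i : Fin 3) :
    refRow n (.inl (s, i)) ⬝ᵥ T = ∑ j, ∑ k,
      refVal 1 (refPts 0 s) j * refVal 2 (refPts 0 s) k * T (i, j, k) := by
  simp [dotProduct, condRow, Fintype.sum_prod_type, refForm_mulVec hn, ite_mul]

theorem refRow_dot_m {n : ℕ} (hn : 6 ≤ n) (T : Tens) (s j : Fin 3) :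
    refRow n (.inr (.inl (s, j))) ⬝ᵥ T = ∑ i, ∑ k,
      refVal 0 (refPts 1 s) i * refVal 2 (refPts 1 s) k * T (i, j, k) := by
  simp [dotProduct, condRow, Fintype.sum_prod_type, refForm_mulVec hn, ite_mul]

theorem refRow_dot_n {n : ℕ} (hn : 6 ≤ n) (T : Tens) (s : Fin 2) (k : Fin 3) :
    refRow n (.inr (.inr (s, k))) ⬝ᵥ T = ∑ i, ∑ j,
      refVal 0 (refPts 2 s.castSucc) i * refVal 1 (refPts 2 s.castSucc) j * T (i, j, k) := by
  simp [dotProduct, condRow, Fintype.sum_prod_type, refForm_mulVec hn, ite_mul]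

/-- A tensor is zero if its cubic vanishes as a function on the points `refPt n w`; it suffices to
take points `w` with small integer coordinates. -/
theorem ref_tensor_eq_zero {T : Tens}
    (h : ∀ w : Fin 7 → ℂ, ∑ p : Fin 3 × Fin 3 × Fin 3,
      T p * (refVal 0 w p.1 * refVal 1 w p.2.1 * refVal 2 w p.2.2) = 0) : T = 0 := by
  have H : ∀ x0 x1 x2 x3 x4 x5 x6 : ℂ, _ := fun x0 x1 x2 x3 x4 x5 x6 =>
    h ![x0, x1, x2, x3, x4, x5, x6]
  simp only [Fintype.sum_prod_type, Fin.sum_univ_three, refVal, Matrix.cons_val] at H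
  have e0 : T (0, 2, 2) = 0 := by
    linear_combination H 0 0 1 0 1 0 0
  have e1 : T (0, 1, 1) = 0 := by
    linear_combination H 0 0 1 1 0 0 0
  have e2 : -T (2, 0, 2) = 0 := by
    linear_combination H 0 1 0 0 0 0 1
  have e3 : -T (1, 0, 1) = 0 := by
    linear_combination H 0 1 0 0 0 1 0
  have e4 : (-2) * T (2, 2, 2) = 0 := by
    linear_combination H 0 0 0 0 1 0 (-1)
  have e5 : (-2) * T (1, 1, 1) = 0 := by
    linear_combination H 0 0 0 1 0 (-1) 0
  have e6 : T (2, 2, 0) = 0 := by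
    linear_combination H 1 0 0 0 1 0 1
  have e7 : T (1, 1, 0) = 0 := by
    linear_combination H 1 0 0 1 0 1 0
  have e8 : T (0, 0, 0) = 0 := by
    linear_combination H 1 1 1 0 0 0 0
  have e9 : -T (1, 2, 1) + T (1, 2, 2) = 0 := by
    linear_combination H 0 0 0 0 1 1 0
  have e10 : T (2, 1, 1) - T (2, 1, 2) = 0 := by
    linear_combination H 0 0 0 1 0 0 1
  have e11 : -T (1, 2, 1) - T (1, 2, 2) = 0 := by
    linear_combination H 0 0 0 0 1 (-1) 0
  have e12 : -T (2, 1, 1) - T (2, 1, 2) = 0 := by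
    linear_combination H 0 0 0 1 0 0 (-1)
  have e13 : -T (1, 2, 1) - T (2, 2, 1) = 0 := by
    linear_combination H 0 0 0 0 1 1 1
  have e14 : -T (1, 1, 2) - T (2, 1, 2) = 0 := by
    linear_combination H 0 0 0 1 0 1 1
  have e15 : -T (0, 0, 2) - T (2, 0, 2) = 0 := by
    linear_combination H 0 1 1 0 0 0 1
  have e16 : -T (0, 0, 1) - T (1, 0, 1) = 0 := by
    linear_combination H 0 1 1 0 0 1 0
  have e17 : T (0, 2, 0) + T (0, 2, 2) = 0 := by
    linear_combination H 1 0 1 0 1 0 0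
  have e18 : T (0, 1, 0) + T (0, 1, 1) = 0 := by
    linear_combination H 1 0 1 1 0 0 0
  have e19 : T (2, 0, 0) - T (2, 0, 2) = 0 := by
    linear_combination H 1 1 0 0 0 0 1
  have e20 : T (1, 0, 0) - T (1, 0, 1) = 0 := by
    linear_combination H 1 1 0 0 0 1 0
  have e21 : T (1, 2, 0) - T (1, 2, 1) + T (1, 2, 2) = 0 := by
    linear_combination H 1 0 0 0 1 1 0
  have e22 : T (2, 1, 0) + T (2, 1, 1) - T (2, 1, 2) = 0 := by
    linear_combination H 1 0 0 1 0 0 1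
  have e23 : -T (0, 2, 1) - T (1, 2, 1) - T (2, 2, 1) = 0 := by
    linear_combination H 0 0 1 0 1 1 1
  have e24 : -T (0, 1, 2) - T (1, 1, 2) - T (2, 1, 2) = 0 := by
    linear_combination H 0 0 1 1 0 1 1
  have e25 : T (2, 0, 1) + T (2, 1, 1) + T (2, 2, 1) = 0 := by
    linear_combination H 0 1 0 1 1 0 1
  have e26 : T (1, 0, 2) + T (1, 1, 2) + T (1, 2, 2) = 0 := by
    linear_combination H 0 1 0 1 1 1 0
  ext ⟨i, j, k⟩
  fin_cases i <;> fin_cases j <;> fin_cases k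
  · change T (0, 0, 0) = 0
    linear_combination e8
  · change T (0, 0, 1) = 0
    linear_combination e3 + (-1) * e16
  · change T (0, 0, 2) = 0
    linear_combination e2 + (-1) * e15
  · change T (0, 1, 0) = 0
    linear_combination (-1) * e1 + e18
  · change T (0, 1, 1) = 0
    linear_combination e1
  · change T (0, 1, 2) = 0
    linear_combination e14 + (-1) * e24
  · change T (0, 2, 0) = 0
    linear_combination (-1) * e0 + e17
  · change T (0, 2, 1) = 0
    linear_combination e13 + (-1) * e23
  · change T (0, 2, 2) = 0
    linear_combination e0
  · change T (1, 0, 0) = 0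
    linear_combination (-1) * e3 + e20
  · change T (1, 0, 1) = 0
    linear_combination (-1) * e3
  · change T (1, 0, 2) = 0
    linear_combination (-1/2) * e9 + (-1/2) * e10 + (1/2) * e11 + (-1/2) * e12 + e14 + e26
  · change T (1, 1, 0) = 0
    linear_combination e7
  · change T (1, 1, 1) = 0
    linear_combination (-1/2) * e5
  · change T (1, 1, 2) = 0
    linear_combination (1/2) * e10 + (1/2) * e12 + (-1) * e14
  · change T (1, 2, 0) = 0
    linear_combination (-1) * e9 + e21
  · change T (1, 2, 1) = 0
    linear_combination (-1/2) * e9 + (-1/2) * e11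
  · change T (1, 2, 2) = 0
    linear_combination (1/2) * e9 + (-1/2) * e11
  · change T (2, 0, 0) = 0
    linear_combination (-1) * e2 + e19
  · change T (2, 0, 1) = 0
    linear_combination (-1/2) * e9 + (-1/2) * e10 + (-1/2) * e11 + (1/2) * e12 + e13 + e25
  · change T (2, 0, 2) = 0
    linear_combination (-1) * e2
  · change T (2, 1, 0) = 0
    linear_combination (-1) * e10 + e22
  · change T (2, 1, 1) = 0
    linear_combination (1/2) * e10 + (-1/2) * e12
  · change T (2, 1, 2) = 0
    linear_combination (-1/2) * e10 + (-1/2) * e12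
  · change T (2, 2, 0) = 0
    linear_combination e6
  · change T (2, 2, 1) = 0
    linear_combination (1/2) * e9 + (1/2) * e11 + (-1) * e13
  · change T (2, 2, 2) = 0
    linear_combination (-1/2) * e4

/-- A tensor in the kernel of `refRow` is determined by three of its entries. -/
theorem ref_cond_eq_zero {n : ℕ} (hn : 6 ≤ n) {T : Tens}
    (hT : ∀ k, refRow n k ⬝ᵥ T = 0) (f0 : T (2, 0, 2) = 0) (f1 : T (2, 2, 1) = 0)
    (f2 : T (2, 2, 2) = 0) : T = 0 := by
  have e0 : T (0, 2, 0) + T (0, 2, 2) = 0 := by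
    have h := hT (.inl (0, 0))
    rw [refRow_dot_l hn] at h
    simp only [Fin.sum_univ_three, refVal, refPts, Matrix.cons_val] at h
    linear_combination h
  have e1 : T (1, 2, 0) + T (1, 2, 2) = 0 := by
    have h := hT (.inl (0, 1))
    rw [refRow_dot_l hn] at h
    simp only [Fin.sum_univ_three, refVal, refPts, Matrix.cons_val] at h
    linear_combination h
  have e2 : T (2, 2, 0) + T (2, 2, 2) = 0 := by
    have h := hT (.inl (0, 2))
    rw [refRow_dot_l hn] at h
    simp only [Fin.sum_univ_three, refVal, refPts, Matrix.cons_val] at h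
    linear_combination h
  have e3 : (-2) * T (0, 0, 0) = 0 := by
    have h := hT (.inl (1, 0))
    rw [refRow_dot_l hn] at h
    simp only [Fin.sum_univ_three, refVal, refPts, Matrix.cons_val] at h
    linear_combination h
  have e4 : (-2) * T (1, 0, 0) = 0 := by
    have h := hT (.inl (1, 1))
    rw [refRow_dot_l hn] at h
    simp only [Fin.sum_univ_three, refVal, refPts, Matrix.cons_val] at h
    linear_combination h
  have e5 : (-2) * T (2, 0, 0) = 0 := by
    have h := hT (.inl (1, 2))
    rw [refRow_dot_l hn] at h
    simp only [Fin.sum_univ_three, refVal, refPts, Matrix.cons_val] at h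
    linear_combination h
  have e6 : T (0, 1, 0) + T (0, 1, 1) + T (0, 1, 2) + T (0, 2, 0) + T (0, 2, 1) + T (0, 2, 2) = 0 := by
    have h := hT (.inl (2, 0))
    rw [refRow_dot_l hn] at h
    simp only [Fin.sum_univ_three, refVal, refPts, Matrix.cons_val] at h
    linear_combination h
  have e7 : T (1, 1, 0) + T (1, 1, 1) + T (1, 1, 2) + T (1, 2, 0) + T (1, 2, 1) + T (1, 2, 2) = 0 := by
    have h := hT (.inl (2, 1))
    rw [refRow_dot_l hn] at h
    simp only [Fin.sum_univ_three, refVal, refPts, Matrix.cons_val] at h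
    linear_combination h
  have e8 : T (2, 1, 0) + T (2, 1, 1) + T (2, 1, 2) + T (2, 2, 0) + T (2, 2, 1) + T (2, 2, 2) = 0 := by
    have h := hT (.inl (2, 2))
    rw [refRow_dot_l hn] at h
    simp only [Fin.sum_univ_three, refVal, refPts, Matrix.cons_val] at h
    linear_combination h
  have e9 : (2) * T (0, 0, 0) + (-4) * T (0, 0, 1) + (2) * T (1, 0, 0) + (-4) * T (1, 0, 1) = 0 := by
    have h := hT (.inr (.inl (0, 0)))
    rw [refRow_dot_m hn] at h
    simp only [Fin.sum_univ_three, refVal, refPts, Matrix.cons_val] at h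
    linear_combination h
  have e10 : (2) * T (0, 1, 0) + (-4) * T (0, 1, 1) + (2) * T (1, 1, 0) + (-4) * T (1, 1, 1) = 0 := by
    have h := hT (.inr (.inl (0, 1)))
    rw [refRow_dot_m hn] at h
    simp only [Fin.sum_univ_three, refVal, refPts, Matrix.cons_val] at h
    linear_combination h
  have e11 : (2) * T (0, 2, 0) + (-4) * T (0, 2, 1) + (2) * T (1, 2, 0) + (-4) * T (1, 2, 1) = 0 := by
    have h := hT (.inr (.inl (0, 2)))
    rw [refRow_dot_m hn] at h
    simp only [Fin.sum_univ_three, refVal, refPts, Matrix.cons_val] at h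
    linear_combination h
  have e12 : -T (0, 0, 1) - T (0, 0, 2) - T (1, 0, 1) - T (1, 0, 2) - T (2, 0, 1) - T (2, 0, 2) = 0 := by
    have h := hT (.inr (.inl (1, 0)))
    rw [refRow_dot_m hn] at h
    simp only [Fin.sum_univ_three, refVal, refPts, Matrix.cons_val] at h
    linear_combination h
  have e13 : -T (0, 1, 1) - T (0, 1, 2) - T (1, 1, 1) - T (1, 1, 2) - T (2, 1, 1) - T (2, 1, 2) = 0 := by
    have h := hT (.inr (.inl (1, 1)))
    rw [refRow_dot_m hn] at h
    simp only [Fin.sum_univ_three, refVal, refPts, Matrix.cons_val] at h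
    linear_combination h
  have e14 : -T (0, 2, 1) - T (0, 2, 2) - T (1, 2, 1) - T (1, 2, 2) - T (2, 2, 1) - T (2, 2, 2) = 0 := by
    have h := hT (.inr (.inl (1, 2)))
    rw [refRow_dot_m hn] at h
    simp only [Fin.sum_univ_three, refVal, refPts, Matrix.cons_val] at h
    linear_combination h
  have e15 : -T (1, 0, 0) - T (1, 0, 1) + (-2) * T (1, 0, 2) + (-2) * T (2, 0, 0) + (-2) * T (2, 0, 1) + (-4) * T (2, 0, 2) = 0 := by
    have h := hT (.inr (.inl (2, 0)))
    rw [refRow_dot_m hn] at h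
    simp only [Fin.sum_univ_three, refVal, refPts, Matrix.cons_val] at h
    linear_combination h
  have e16 : -T (1, 1, 0) - T (1, 1, 1) + (-2) * T (1, 1, 2) + (-2) * T (2, 1, 0) + (-2) * T (2, 1, 1) + (-4) * T (2, 1, 2) = 0 := by
    have h := hT (.inr (.inl (2, 1)))
    rw [refRow_dot_m hn] at h
    simp only [Fin.sum_univ_three, refVal, refPts, Matrix.cons_val] at h
    linear_combination h
  have e17 : -T (1, 2, 0) - T (1, 2, 1) + (-2) * T (1, 2, 2) + (-2) * T (2, 2, 0) + (-2) * T (2, 2, 1) + (-4) * T (2, 2, 2) = 0 := by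
    have h := hT (.inr (.inl (2, 2)))
    rw [refRow_dot_m hn] at h
    simp only [Fin.sum_univ_three, refVal, refPts, Matrix.cons_val] at h
    linear_combination h
  have e18 : T (1, 1, 0) = 0 := by
    have h := hT (.inr (.inr (0, 0)))
    rw [refRow_dot_n hn] at h
    simp only [Fin.sum_univ_three, refVal, refPts, Matrix.cons_val, Fin.castSucc_zero] at h
    linear_combination h
  have e19 : T (1, 1, 1) = 0 := by
    have h := hT (.inr (.inr (0, 1)))
    rw [refRow_dot_n hn] at h
    simp only [Fin.sum_univ_three, refVal, refPts, Matrix.cons_val, Fin.castSucc_zero] at h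
    linear_combination h
  have e20 : T (1, 1, 2) = 0 := by
    have h := hT (.inr (.inr (0, 2)))
    rw [refRow_dot_n hn] at h
    simp only [Fin.sum_univ_three, refVal, refPts, Matrix.cons_val, Fin.castSucc_zero] at h
    linear_combination h
  have e21 : T (1, 0, 0) + T (1, 1, 0) - T (1, 2, 0) - T (2, 0, 0) - T (2, 1, 0) + T (2, 2, 0) = 0 := by
    have h := hT (.inr (.inr (1, 0)))
    rw [refRow_dot_n hn] at h
    simp only [Fin.sum_univ_three, refVal, refPts, Matrix.cons_val, Fin.castSucc_one] at h
    linear_combination h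
  have e22 : T (1, 0, 1) + T (1, 1, 1) - T (1, 2, 1) - T (2, 0, 1) - T (2, 1, 1) + T (2, 2, 1) = 0 := by
    have h := hT (.inr (.inr (1, 1)))
    rw [refRow_dot_n hn] at h
    simp only [Fin.sum_univ_three, refVal, refPts, Matrix.cons_val, Fin.castSucc_one] at h
    linear_combination h
  have e23 : T (1, 0, 2) + T (1, 1, 2) - T (1, 2, 2) - T (2, 0, 2) - T (2, 1, 2) + T (2, 2, 2) = 0 := by
    have h := hT (.inr (.inr (1, 2)))
    rw [refRow_dot_n hn] at h
    simp only [Fin.sum_univ_three, refVal, refPts, Matrix.cons_val, Fin.castSucc_one] at h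
    linear_combination h
  ext ⟨i, j, k⟩
  fin_cases i <;> fin_cases j <;> fin_cases k
  · change T (0, 0, 0) = 0
    linear_combination (-1/2) * e3
  · change T (0, 0, 1) = 0
    linear_combination (-1/4) * e3 + (-3/4) * e4 + (-2) * e7 + (-2) * e8 + (-1/4) * e9 + (1/3) * e15 + (-2/3) * e16
      + (-4/3) * e17 + (2) * e18 + (2) * e19 + (-2/3) * e21 + (-2/3) * e22 + (2/3) * e23 + (2) *
      f0 + (-4) * f2
  · change T (0, 0, 2) = 0
    linear_combination (1/4) * e3 + (1/4) * e4 + (-1/2) * e5 + e7 + e8 + (1/4) * e9 + (-1) * e12 + (1/3) * e15 +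
      (1/3) * e16 + (2/3) * e17 + (-1) * e18 + (-1) * e19 + (1/3) * e21 + (1/3) * e22 + (-1/3) *
      e23 + (2) * f2
  · change T (0, 1, 0) = 0
    linear_combination (-2) * e0 + (-1) * e1 + (1/2) * e4 + (-1/2) * e5 + e6 + (2) * e7 + e8 + (1/2) * e11 + e13 +
      (-1) * e14 + e17 + (-3) * e18 + (-1) * e19 + (-1) * e20 + e21 + (2) * f2
  · change T (0, 1, 1) = 0
    linear_combination (-1) * e0 + (-1/2) * e1 + (1/4) * e4 + (-1/4) * e5 + (1/2) * e6 + e7 + (1/2) * e8 + (-1/4) *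
      e10 + (1/4) * e11 + (1/2) * e13 + (-1/2) * e14 + (1/2) * e17 + (-1) * e18 + (-3/2) * e19 +
      (-1/2) * e20 + (1/2) * e21 + f2
  · change T (0, 1, 2) = 0
    linear_combination e0 + (-1/2) * e1 + (-3/4) * e4 + (3/4) * e5 + (-1/2) * e6 + (-2) * e7 + (-3/2) * e8 + (1/4)
      * e10 + (-1/4) * e11 + (-3/2) * e13 + (1/2) * e14 + (-3/2) * e17 + (3) * e18 + (3/2) * e19 +
      (1/2) * e20 + (-3/2) * e21 + (-1) * f1 + (-4) * f2
  · change T (0, 2, 0) = 0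
    linear_combination (2) * e0 + e1 + (-2) * e2 + (-1) * e7 + (-1/2) * e11 + (2) * e14 + (-1) * e17 + e18 + e19 +
      e20
  · change T (0, 2, 1) = 0
    linear_combination e0 + (2) * e1 + (-1) * e7 + (-1/2) * e11 + e14 + e18 + e19 + e20 + f1 + f2
  · change T (0, 2, 2) = 0
    linear_combination (-1) * e0 + (-1) * e1 + (2) * e2 + e7 + (1/2) * e11 + (-2) * e14 + e17 + (-1) * e18 + (-1) *
      e19 + (-1) * e20
  · change T (1, 0, 0) = 0
    linear_combination (-1/2) * e4
  · change T (1, 0, 1) = 0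
    linear_combination (1/2) * e4 + (2) * e7 + (2) * e8 + (-1/3) * e15 + (2/3) * e16 + (4/3) * e17 + (-2) * e18 +
      (-2) * e19 + (2/3) * e21 + (2/3) * e22 + (-2/3) * e23 + (-2) * f0 + (4) * f2
  · change T (1, 0, 2) = 0
    linear_combination (-1) * e2 + (-1) * e7 + (-1) * e8 + (-1/2) * e16 + (-1) * e17 + (1/2) * e18 + (1/2) * e19 +
      (-1) * e20 + e23 + f0 + (-1) * f1 + (-3) * f2
  · change T (1, 1, 0) = 0
    linear_combination e18
  · change T (1, 1, 1) = 0
    linear_combination e19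
  · change T (1, 1, 2) = 0
    linear_combination e20
  · change T (1, 2, 0) = 0
    linear_combination e1 + (2) * e2 + e7 + e17 + (-1) * e18 + (-1) * e19 + (-1) * e20 + (2) * f1 + (2) * f2
  · change T (1, 2, 1) = 0
    linear_combination (-1) * e1 + e7 + (-1) * e18 + (-1) * e19 + (-1) * e20
  · change T (1, 2, 2) = 0
    linear_combination (-2) * e2 + (-1) * e7 + (-1) * e17 + e18 + e19 + e20 + (-2) * f1 + (-2) * f2
  · change T (2, 0, 0) = 0
    linear_combination (-1/2) * e5
  · change T (2, 0, 1) = 0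
    linear_combination e2 + (1/2) * e5 + (-1/3) * e15 + (1/6) * e16 + (1/3) * e17 + (1/2) * e18 + (1/2) * e19 + e20
      + (-1/3) * e21 + (-1/3) * e22 + (-2/3) * e23 + (-2) * f0 + f1 + f2
  · change T (2, 0, 2) = 0
    linear_combination f0
  · change T (2, 1, 0) = 0
    linear_combination (-1) * e1 + (-1) * e2 + (-1/2) * e4 + (1/2) * e5 + (-1) * e7 + (-1) * e17 + (2) * e18 + e19
      + e20 + (-1) * e21 + (-2) * f1 + (-3) * f2
  · change T (2, 1, 1) = 0
    linear_combination e1 + (-1) * e2 + (1/2) * e4 + (-1/2) * e5 + e7 + (2) * e8 + (1/2) * e16 + e17 + (-3/2) * e18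
      + (-1/2) * e19 + e21 + (3) * f2
  · change T (2, 1, 2) = 0
    linear_combination e2 + (-1) * e8 + (-1/2) * e16 + (-1/2) * e18 + (-1/2) * e19 + (-1) * e20 + f1
  · change T (2, 2, 0) = 0
    linear_combination e2 + (-1) * f2
  · change T (2, 2, 1) = 0
    linear_combination f1
  · change T (2, 2, 2) = 0
    linear_combination f2

/-- A basis of the kernel of `refRow`. -/
noncomputable def refKer (j : Fin 3) : Tens := fun p =>
  (![![![![0, 2, 0], ![0, 0, 0], ![0, 0, 0]],
    ![![0, -2, 1], ![0, 0, 0], ![0, 0, 0]],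
    ![![0, -2, 1], ![0, 0, 0], ![0, 0, 0]]],
    ![![![0, 0, 0], ![0, 0, -1], ![0, 1, 0]],
    ![![0, 0, -1], ![0, 0, 0], ![2, 0, -2]],
    ![![0, 1, 0], ![-2, 0, 1], ![0, 1, 0]]],
    ![![![0, -4, 2], ![2, 1, -4], ![0, 1, 0]],
    ![![0, 4, -3], ![0, 0, 0], ![2, 0, -2]],
    ![![0, 1, 0], ![-3, 3, 0], ![-1, 0, 1]]]] : Fin 3 → Fin 3 → Fin 3 → Fin 3 → ℂ) j p.1 p.2.1 p.2.2

theorem refRow_dot_refKer {n : ℕ} (hn : 6 ≤ n) (k : CondIdx) (j : Fin 3) :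
    refRow n k ⬝ᵥ refKer j = 0 := by
  obtain ⟨s, i⟩ | ⟨s, i⟩ | ⟨s, i⟩ := k
  · rw [refRow_dot_l hn]
    fin_cases s <;> fin_cases i <;> fin_cases j <;>
      simp [Fin.sum_univ_three, refVal, refPts, refKer] <;> norm_num
  · rw [refRow_dot_m hn]
    fin_cases s <;> fin_cases i <;> fin_cases j <;>
      simp [Fin.sum_univ_three, refVal, refPts, refKer] <;> norm_num
  · rw [refRow_dot_n hn]
    fin_cases s <;> fin_cases i <;> fin_cases j <;>
      simp [Fin.sum_univ_three, refVal, refPts, refKer] <;> norm_num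

theorem refKer_dot {n : ℕ} (hn : 6 ≤ n) (t : Fin 3) (x : Fin 7) (ζ : TriMat) :
    refKer t ⬝ᵥ polarMap (refForm n 0) (refForm n 1) (refForm n 2) (refEps hn x) ζ =
      ∑ i, ∑ j, ∑ k, refKer t (i, j, k) *
        (refVal 0 (fun y => if x = y then 1 else 0) i * ζ 0 j k +
          refVal 1 (fun y => if x = y then 1 else 0) j * ζ 1 i k +
          refVal 2 (fun y => if x = y then 1 else 0) k * ζ 2 i j) := by
  simp [dotProduct, Fintype.sum_prod_type, polarMap, refForm_refEps hn]

/-- A triple in the projection of the kernel of `polarSys` is determined by eight of its entries.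
The unknown coefficients in `polarSys` are eliminated by pairing with `refKer`. -/
theorem ref_polar_eq_zero {n : ℕ} (hn : 6 ≤ n) {ζ : TriMat}
    (h : ∀ j x, refKer j ⬝ᵥ polarMap (refForm n 0) (refForm n 1) (refForm n 2) (refEps hn x) ζ = 0)
    (f0 : ζ 0 0 0 = 0)
    (f1 : ζ 0 2 1 = 0)
    (f2 : ζ 0 2 2 = 0)
    (f3 : ζ 1 1 1 = 0)
    (f4 : ζ 1 2 1 = 0)
    (f5 : ζ 1 2 2 = 0)
    (f6 : ζ 2 1 1 = 0)
    (f7 : ζ 2 2 2 = 0) :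
    ζ = 0 := by
  simp only [refKer_dot hn] at h
  have e1 : (2) * ζ 1 0 1 + (-2) * ζ 1 1 1 + ζ 1 1 2 + (-2) * ζ 1 2 1 + ζ 1 2 2 = 0 := by
    have h := h 0 1
    simp only [Fin.sum_univ_three, refVal, refKer, Matrix.cons_val, Fin.reduceEq, if_true, if_false] at h
    linear_combination h
  have e2 : (2) * ζ 0 0 1 = 0 := by
    have h := h 0 2
    simp only [Fin.sum_univ_three, refVal, refKer, Matrix.cons_val, Fin.reduceEq, if_true, if_false] at h
    linear_combination h
  have e3 : (2) * ζ 2 0 0 + (-2) * ζ 2 1 0 + (-2) * ζ 2 2 0 = 0 := by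
    have h := h 0 3
    simp only [Fin.sum_univ_three, refVal, refKer, Matrix.cons_val, Fin.reduceEq, if_true, if_false] at h
    linear_combination h
  have e4 : ζ 2 1 0 + ζ 2 2 0 = 0 := by
    have h := h 0 4
    simp only [Fin.sum_univ_three, refVal, refKer, Matrix.cons_val, Fin.reduceEq, if_true, if_false] at h
    linear_combination h
  have e5 : (-2) * ζ 0 0 1 + ζ 0 0 2 + (-2) * ζ 2 0 0 + (2) * ζ 2 1 0 + (2) * ζ 2 2 0 = 0 := by
    have h := h 0 5
    simp only [Fin.sum_univ_three, refVal, refKer, Matrix.cons_val, Fin.reduceEq, if_true, if_false] at h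
    linear_combination h
  have e6 : (-2) * ζ 0 0 1 + ζ 0 0 2 - ζ 2 1 0 - ζ 2 2 0 = 0 := by
    have h := h 0 6
    simp only [Fin.sum_univ_three, refVal, refKer, Matrix.cons_val, Fin.reduceEq, if_true, if_false] at h
    linear_combination h
  have e7 : (2) * ζ 2 1 2 + (-2) * ζ 2 2 1 = 0 := by
    have h := h 1 0
    simp only [Fin.sum_univ_three, refVal, refKer, Matrix.cons_val, Fin.reduceEq, if_true, if_false] at h
    linear_combination h
  have e8 : -ζ 1 1 2 + ζ 1 2 1 = 0 := by
    have h := h 1 1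
    simp only [Fin.sum_univ_three, refVal, refKer, Matrix.cons_val, Fin.reduceEq, if_true, if_false] at h
    linear_combination h
  have e9 : -ζ 0 1 2 + ζ 0 2 1 = 0 := by
    have h := h 1 2
    simp only [Fin.sum_univ_three, refVal, refKer, Matrix.cons_val, Fin.reduceEq, if_true, if_false] at h
    linear_combination h
  have e10 : -ζ 1 0 2 + (-2) * ζ 1 2 0 + ζ 1 2 2 + ζ 2 0 2 + ζ 2 2 0 + ζ 2 2 2 = 0 := by
    have h := h 1 3
    simp only [Fin.sum_univ_three, refVal, refKer, Matrix.cons_val, Fin.reduceEq, if_true, if_false] at h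
    linear_combination h
  have e11 : ζ 1 0 1 + (2) * ζ 1 1 0 + (-2) * ζ 1 1 2 + ζ 1 2 1 - ζ 2 0 1 - ζ 2 1 0 + (-2) * ζ 2 1 2 + ζ
      2 2 1 = 0 := by
    have h := h 1 4
    simp only [Fin.sum_univ_three, refVal, refKer, Matrix.cons_val, Fin.reduceEq, if_true, if_false] at h
    linear_combination h
  have e12 : -ζ 0 0 2 + (2) * ζ 0 2 0 + (-2) * ζ 0 2 2 - ζ 2 0 2 - ζ 2 2 0 - ζ 2 2 2 = 0 := by
    have h := h 1 5
    simp only [Fin.sum_univ_three, refVal, refKer, Matrix.cons_val, Fin.reduceEq, if_true, if_false] at h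
    linear_combination h
  have e13 : ζ 0 0 1 + (-2) * ζ 0 1 0 + ζ 0 1 2 + ζ 0 2 1 + ζ 2 0 1 + ζ 2 1 0 + (2) * ζ 2 1 2 - ζ 2 2 1 = 0 := by
    have h := h 1 6
    simp only [Fin.sum_univ_three, refVal, refKer, Matrix.cons_val, Fin.reduceEq, if_true, if_false] at h
    linear_combination h
  have e14 : (2) * ζ 2 0 1 + (2) * ζ 2 1 2 + (-3) * ζ 2 2 1 - ζ 2 2 2 = 0 := by
    have h := h 2 0
    simp only [Fin.sum_univ_three, refVal, refKer, Matrix.cons_val, Fin.reduceEq, if_true, if_false] at h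
    linear_combination h
  have e15 : (-4) * ζ 1 0 1 + (2) * ζ 1 0 2 + (4) * ζ 1 1 1 + (-3) * ζ 1 1 2 + ζ 1 2 1 = 0 := by
    have h := h 2 1
    simp only [Fin.sum_univ_three, refVal, refKer, Matrix.cons_val, Fin.reduceEq, if_true, if_false] at h
    linear_combination h
  have e16 : (-4) * ζ 0 0 1 + (2) * ζ 0 0 2 + (2) * ζ 0 1 0 + ζ 0 1 1 + (-4) * ζ 0 1 2 + ζ 0 2 1 = 0 := by
    have h := h 2 2
    simp only [Fin.sum_univ_three, refVal, refKer, Matrix.cons_val, Fin.reduceEq, if_true, if_false] at h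
    linear_combination h
  have e17 : (2) * ζ 1 0 0 + ζ 1 0 1 + (-4) * ζ 1 0 2 + (-3) * ζ 1 2 0 + (3) * ζ 1 2 1 + (-4) * ζ 2 0 0 +
      ζ 2 0 1 + ζ 2 0 2 + (4) * ζ 2 1 0 + ζ 2 2 0 + (3) * ζ 2 2 1 = 0 := by
    have h := h 2 3
    simp only [Fin.sum_univ_three, refVal, refKer, Matrix.cons_val, Fin.reduceEq, if_true, if_false] at h
    linear_combination h
  have e18 : ζ 1 0 1 + (2) * ζ 1 1 0 + (-2) * ζ 1 1 2 - ζ 1 2 0 + ζ 1 2 2 + (2) * ζ 2 0 0 + (-4) * ζ 2 0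
      1 + (-3) * ζ 2 1 0 + (-2) * ζ 2 1 2 + ζ 2 2 2 = 0 := by
    have h := h 2 4
    simp only [Fin.sum_univ_three, refVal, refKer, Matrix.cons_val, Fin.reduceEq, if_true, if_false] at h
    linear_combination h
  have e19 : (4) * ζ 0 0 1 + (-3) * ζ 0 0 2 + (2) * ζ 0 2 0 + (-2) * ζ 0 2 2 + (4) * ζ 2 0 0 - ζ 2 0 1 -
      ζ 2 0 2 + (-4) * ζ 2 1 0 - ζ 2 2 0 + (-3) * ζ 2 2 1 = 0 := by
    have h := h 2 5
    simp only [Fin.sum_univ_three, refVal, refKer, Matrix.cons_val, Fin.reduceEq, if_true, if_false] at h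
    linear_combination h
  have e20 : ζ 0 0 1 + (-3) * ζ 0 1 0 + (3) * ζ 0 1 1 - ζ 0 2 0 + ζ 0 2 2 + (-2) * ζ 2 0 0 + (4) * ζ 2 0
      1 + (3) * ζ 2 1 0 + (2) * ζ 2 1 2 - ζ 2 2 2 = 0 := by
    have h := h 2 6
    simp only [Fin.sum_univ_three, refVal, refKer, Matrix.cons_val, Fin.reduceEq, if_true, if_false] at h
    linear_combination h
  ext b i j
  fin_cases b <;> fin_cases i <;> fin_cases j
  · change ζ 0 0 0 = 0
    linear_combination f0
  · change ζ 0 0 1 = 0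
    linear_combination (1/2) * e2
  · change ζ 0 0 2 = 0
    linear_combination e2 + e3 + e5
  · change ζ 0 1 0 = 0
    linear_combination (-5/22) * e1 + (-17/22) * e2 + (-85/22) * e3 + (-12/11) * e4 + (-73/22) * e5 + (-20/11) * e7
      + (5/44) * e8 + (-43/11) * e9 + (-5/22) * e10 + (-5/11) * e11 + (-1/22) * e12 + (17/11) *
      e13 + (8/11) * e14 + (-5/44) * e15 + (15/11) * e16 + (5/11) * e18 + (-2/11) * e19 + (-5/11)
      * e20 + f1
  · change ζ 0 1 1 = 0
    linear_combination (5/11) * e1 + (17/11) * e2 + (63/11) * e3 + (24/11) * e4 + (51/11) * e5 + (40/11) * e7 +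
      (-5/22) * e8 + (42/11) * e9 + (5/11) * e10 + (10/11) * e11 + (1/11) * e12 + (-34/11) * e13 +
      (-16/11) * e14 + (5/22) * e15 + (-19/11) * e16 + (-10/11) * e18 + (4/11) * e19 + (10/11) *
      e20 + f1
  · change ζ 0 1 2 = 0
    linear_combination (-1) * e9 + f1
  · change ζ 0 2 0 = 0
    linear_combination (23/22) * e1 + (65/22) * e2 + (237/22) * e3 + (42/11) * e4 + (195/22) * e5 + (70/11) * e7 +
      (-23/44) * e8 + (90/11) * e9 + (23/22) * e10 + (23/11) * e11 + (9/22) * e12 + (-54/11) * e13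
      + (-28/11) * e14 + (23/44) * e15 + (-36/11) * e16 + (-23/11) * e18 + (7/11) * e19 + (12/11)
      * e20 + f2
  · change ζ 0 2 1 = 0
    linear_combination f1
  · change ζ 0 2 2 = 0
    linear_combination f2
  · change ζ 1 0 0 = 0
    linear_combination (67/44) * e1 + (27/22) * e2 + (135/22) * e3 + (21/11) * e4 + (57/11) * e5 + (35/11) * e7 +
      (-25/22) * e8 + (45/11) * e9 + (-5/22) * e10 + (23/22) * e11 + (-6/11) * e12 + (-27/11) *
      e13 + (-14/11) * e14 + (39/44) * e15 + (-18/11) * e16 + (1/2) * e17 + (-23/22) * e18 +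
      (9/11) * e19 + (6/11) * e20 + (-1/2) * f3 + (3/4) * f4 + (-1/4) * f5
  · change ζ 1 0 1 = 0
    linear_combination (1/2) * e1 + (1/2) * e8 + f3 + (1/2) * f4 + (-1/2) * f5
  · change ζ 1 0 2 = 0
    linear_combination e1 + (-1/2) * e8 + (1/2) * e15 + (2) * f4 + (-1) * f5
  · change ζ 1 1 0 = 0
    linear_combination (-21/44) * e1 + (-45/44) * e2 + (-85/22) * e3 + (-12/11) * e4 + (-73/22) * e5 + (-20/11) *
      e7 + (-25/22) * e8 + (-75/22) * e9 + (-5/22) * e10 + (1/22) * e11 + (-1/22) * e12 + (45/22)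
      * e13 + (8/11) * e14 + (-5/44) * e15 + (15/11) * e16 + (5/11) * e18 + (-2/11) * e19 +
      (-5/11) * e20 + (-1/2) * f3 + (1/4) * f4 + (1/4) * f5
  · change ζ 1 1 1 = 0
    linear_combination f3
  · change ζ 1 1 2 = 0
    linear_combination (-1) * e8 + f4
  · change ζ 1 2 0 = 0
    linear_combination (6/11) * e1 + (27/11) * e2 + (113/11) * e3 + (42/11) * e4 + (92/11) * e5 + (70/11) * e7 +
      (-3/11) * e8 + (90/11) * e9 + (6/11) * e10 + (23/11) * e11 + (-1/11) * e12 + (-54/11) * e13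
      + (-28/11) * e14 + (3/11) * e15 + (-36/11) * e16 + (-23/11) * e18 + (7/11) * e19 + (12/11) *
      e20 + (-1) * f4 + f5
  · change ζ 1 2 1 = 0
    linear_combination f4
  · change ζ 1 2 2 = 0
    linear_combination f5
  · change ζ 2 0 0 = 0
    linear_combination (1/2) * e3 + e4
  · change ζ 2 0 1 = 0
    linear_combination (-4/11) * e1 + (-18/11) * e2 + (-68/11) * e3 + (-28/11) * e4 + (-54/11) * e5 + (-43/11) * e7
      + (2/11) * e8 + (-60/11) * e9 + (-4/11) * e10 + (-8/11) * e11 + (-3/11) * e12 + (36/11) *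
      e13 + (15/11) * e14 + (-2/11) * e15 + (24/11) * e16 + (8/11) * e18 + (-1/11) * e19 + (-8/11)
      * e20
  · change ζ 2 0 2 = 0
    linear_combination (30/11) * e1 + (171/22) * e2 + (345/11) * e3 + (133/11) * e4 + (273/11) * e5 + (207/11) * e7
      + (-15/11) * e8 + (285/11) * e9 + (30/11) * e10 + (60/11) * e11 + (6/11) * e12 + (-171/11) *
      e13 + (-74/11) * e14 + (15/11) * e15 + (-114/11) * e16 + (-60/11) * e18 + (13/11) * e19 +
      (38/11) * e20
  · change ζ 2 1 0 = 0
    linear_combination (7/11) * e1 + (63/22) * e2 + (119/11) * e3 + (60/11) * e4 + (89/11) * e5 + (67/11) * e7 +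
      (-7/22) * e8 + (105/11) * e9 + (7/11) * e10 + (14/11) * e11 + (8/11) * e12 + (-63/11) * e13
      + (-18/11) * e14 + (7/22) * e15 + (-42/11) * e16 + (-14/11) * e18 + (-1/11) * e19 + (14/11)
      * e20 + f7
  · change ζ 2 1 1 = 0
    linear_combination f6
  · change ζ 2 1 2 = 0
    linear_combination (-8/11) * e1 + (-36/11) * e2 + (-136/11) * e3 + (-56/11) * e4 + (-108/11) * e5 + (-139/22) *
      e7 + (4/11) * e8 + (-120/11) * e9 + (-8/11) * e10 + (-16/11) * e11 + (-6/11) * e12 + (72/11)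
      * e13 + (19/11) * e14 + (-4/11) * e15 + (48/11) * e16 + (16/11) * e18 + (-2/11) * e19 +
      (-16/11) * e20 + (-1) * f7
  · change ζ 2 2 0 = 0
    linear_combination (-7/11) * e1 + (-63/22) * e2 + (-119/11) * e3 + (-49/11) * e4 + (-89/11) * e5 + (-67/11) *
      e7 + (7/22) * e8 + (-105/11) * e9 + (-7/11) * e10 + (-14/11) * e11 + (-8/11) * e12 + (63/11)
      * e13 + (18/11) * e14 + (-7/22) * e15 + (42/11) * e16 + (14/11) * e18 + (1/11) * e19 +
      (-14/11) * e20 + (-1) * f7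
  · change ζ 2 2 1 = 0
    linear_combination (-8/11) * e1 + (-36/11) * e2 + (-136/11) * e3 + (-56/11) * e4 + (-108/11) * e5 + (-75/11) *
      e7 + (4/11) * e8 + (-120/11) * e9 + (-8/11) * e10 + (-16/11) * e11 + (-6/11) * e12 + (72/11)
      * e13 + (19/11) * e14 + (-4/11) * e15 + (48/11) * e16 + (16/11) * e18 + (-2/11) * e19 +
      (-16/11) * e20 + (-1) * f7
  · change ζ 2 2 2 = 0
    linear_combination f7

theorem ref_cubic {n : ℕ} (hn : 6 ≤ n) :
    Function.Injective (cubicForm (refForm n 0) (refForm n 1) (refForm n 2)) := by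
  rw [injective_iff_map_eq_zero]
  intro T hT
  refine ref_tensor_eq_zero fun w => ?_
  have h := evalAt_cubicForm (refForm n 0) (refForm n 1) (refForm n 2) T (refPt n w)
  rw [hT, map_zero] at h
  simpa [refForm_mulVec hn] using h.symm

theorem finrank_ker_refRow {n : ℕ} (hn : 6 ≤ n) :
    Module.finrank ℂ (LinearMap.ker (refRow n).mulVecLin) ≤ 3 := by
  let g : LinearMap.ker (refRow n).mulVecLin →ₗ[ℂ] (Fin 3 → ℂ) :=
    LinearMap.funLeft ℂ ℂ (![(2, 0, 2), (2, 2, 1), (2, 2, 2)] : Fin 3 → Fin 3 × Fin 3 × Fin 3) ∘ₗ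
      Submodule.subtype _
  have hg : Function.Injective g := by
    rw [injective_iff_map_eq_zero]
    rintro ⟨T, hT⟩ h
    rw [Subtype.ext_iff]
    exact ref_cond_eq_zero hn (fun k => congrFun hT k) (congrFun h 0) (congrFun h 1) (congrFun h 2)
  simpa using LinearMap.finrank_le_finrank_of_injective hg

/-- The `24` rows of `refRow` are linearly independent. -/
theorem refRow_vecMul_eq_zero {n : ℕ} (hn : 6 ≤ n) {μ : CondIdx → ℂ}
    (h : Matrix.vecMul μ (refRow n) = 0) : μ = 0 := by
  have h1 := LinearMap.finrank_range_add_finrank_ker (refRow n).mulVecLin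
  have h2 := finrank_ker_refRow hn
  have h3 : LinearMap.range (refRow n).mulVecLin = ⊤ := by
    refine Submodule.eq_top_of_finrank_eq (le_antisymm (Submodule.finrank_le _) ?_)
    simp only [Module.finrank_fintype_fun_eq_card] at h1 ⊢
    simp only [Fintype.card_prod, Fintype.card_sum, Fintype.card_fin] at h1 ⊢
    omega
  refine dotProduct_eq_zero _ fun w => ?_
  obtain ⟨T, rfl⟩ := LinearMap.range_eq_top.1 h3 w
  rw [Matrix.mulVecLin_apply, Matrix.dotProduct_mulVec, h, zero_dotProduct]

theorem finrank_ker_refPolar {n : ℕ} (hn : 6 ≤ n) :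
    Module.finrank ℂ (LinearMap.ker (polarSys (refEps hn) (refForm n 0) (refForm n 1) (refForm n 2)
      (fun s => refPt n (refPts 0 s)) (fun s => refPt n (refPts 1 s))
      fun s => refPt n (refPts 2 s.castSucc))) ≤ 8 := by
  let K := LinearMap.ker (polarSys (refEps hn) (refForm n 0) (refForm n 1) (refForm n 2)
      (fun s => refPt n (refPts 0 s)) (fun s => refPt n (refPts 1 s))
      fun s => refPt n (refPts 2 s.castSucc))
  let ev (b i j : Fin 3) : TriMat →ₗ[ℂ] ℂ :=
    LinearMap.proj j ∘ₗ LinearMap.proj i ∘ₗ LinearMap.proj b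
  let g : K →ₗ[ℂ] (Fin 8 → ℂ) :=
    (LinearMap.pi ![ev 0 0 0, ev 0 2 1, ev 0 2 2, ev 1 1 1, ev 1 2 1, ev 1 2 2, ev 2 1 1, ev 2 2 2])
      ∘ₗ LinearMap.fst ℂ _ _ ∘ₗ K.subtype
  have hg : Function.Injective g := by
    rw [injective_iff_map_eq_zero]
    rintro ⟨⟨ζ, μ⟩, hK⟩ h
    have hx : ∀ x, polarMap (refForm n 0) (refForm n 1) (refForm n 2) (refEps hn x) ζ =
        Matrix.vecMul (μ x) (refRow n) := fun x => sub_eq_zero.1 (congrFun hK x)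
    have hζ : ζ = 0 := by
      refine ref_polar_eq_zero hn (fun j x => ?_) (congrFun h 0) (congrFun h 1) (congrFun h 2)
        (congrFun h 3) (congrFun h 4) (congrFun h 5) (congrFun h 6) (congrFun h 7)
      have h0 : (refRow n).mulVec (refKer j) = 0 := funext fun k => refRow_dot_refKer hn k j
      rw [hx, dotProduct_comm, ← Matrix.dotProduct_mulVec, h0, dotProduct_zero]
    have hμ : μ = 0 := funext fun x => refRow_vecMul_eq_zero hn <| by
      rw [← hx, hζ, map_zero]
    rw [Subtype.ext_iff]
    exact Prod.ext hζ hμ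
  simpa using LinearMap.finrank_le_finrank_of_injective hg

theorem linearIndependent_of_det_ne_zero {f : Fin 3 → Fin 3 → ℂ} (h : (Matrix.of f).det ≠ 0) :
    LinearIndependent ℂ f :=
  Matrix.linearIndependent_rows_of_det_ne_zero h

theorem ref_goodConfig {n : ℕ} (hn : 6 ≤ n) :
    GoodConfig (refEps hn) (refForm n 0) (refForm n 1) (refForm n 2)
      (fun s => refPt n (refPts 0 s)) (fun s => refPt n (refPts 1 s))
      fun s => refPt n (refPts 2 s.castSucc) where
  cubic := ref_cubic hn
  cond := finrank_ker_refRow hn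
  polar := finrank_ker_refPolar hn
  known := by
    rw [Fintype.linearIndependent_iff]
    intro r hr
    have h (b i j : Fin 3) := congrFun (congrFun (congrFun hr b) i) j
    simp only [Fintype.sum_sum_type, Fin.sum_univ_three, Fin.sum_univ_two, triKnown,
      refForm_mulVec hn, Pi.add_apply, Pi.smul_apply, smul_eq_mul] at h
    have l0 := h 0 2 0
    have l1 := h 0 0 0
    have l2 := h 0 1 0
    have m0 := h 1 0 0
    have m1 := h 1 0 2
    have m2 := h 1 2 2
    have n0 := h 2 1 1
    have n1 := h 2 2 2
    simp [refVal, refPts] at l0 l1 l2 m0 m1 m2 n0 n1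
    rintro (s | s | s) <;> fin_cases s <;> simp <;> grind
  bl := by
    simp only [refForm_mulVec hn]
    refine linearIndependent_of_det_ne_zero ?_
    simp [Matrix.det_fin_three, refVal, refPts]
  cl := by
    simp only [refForm_mulVec hn]
    refine linearIndependent_of_det_ne_zero ?_
    simp [Matrix.det_fin_three, refVal, refPts]
  am := by
    simp only [refForm_mulVec hn]
    refine linearIndependent_of_det_ne_zero ?_
    simp [Matrix.det_fin_three, refVal, refPts]
  cm := by
    simp only [refForm_mulVec hn]
    refine linearIndependent_of_det_ne_zero ?_
    simp [Matrix.det_fin_three, refVal, refPts]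
    norm_num
  clm s t := by
    simp only [refForm_mulVec hn]
    rw [LinearIndependent.pair_iff]
    intro x y h
    have h0 := congrFun h 0
    have h1 := congrFun h 1
    have h2 := congrFun h 2
    fin_cases s <;> fin_cases t <;> simp [refVal, refPts] at h0 h1 h2 <;> grind

/-- Right inverses of the matrices `refForm n k`: the columns are the basis vectors with the
indices `2, 5, 6`; `1, 3, 4`; `0, 3, 4`. -/
noncomputable def refInv (n : ℕ) (k : Fin 3) : Matrix (Fin (n + 1)) (Fin 3) ℂ :=
  Matrix.of fun x i => refPt n (fun y =>
    if y = (![![2, 5, 6], ![1, 3, 4], ![0, 3, 4]] : Fin 3 → Fin 3 → Fin 7) k i then 1 else 0) x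

theorem refForm_mul_refInv {n : ℕ} (hn : 6 ≤ n) (k : Fin 3) : refForm n k * refInv n k = 1 := by
  ext i j
  have h1 : (refForm n k * refInv n k) i j = (refForm n k).mulVec (refPt n (fun y =>
    if y = (![![2, 5, 6], ![1, 3, 4], ![0, 3, 4]] : Fin 3 → Fin 3 → Fin 7) k j then 1 else 0)) i :=
    rfl
  rw [h1, refForm_mulVec hn]
  fin_cases k <;> fin_cases i <;> fin_cases j <;> simp [refVal]

theorem refForm_mulVec_refPts {n : ℕ} (hn : 6 ≤ n) (k s : Fin 3) :
    (refForm n k).mulVec (refPt n (refPts k s)) = 0 := by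
  rw [refForm_mulVec hn]
  ext i
  fin_cases k <;> fin_cases s <;> fin_cases i <;> simp [refVal, refPts]

end Reference

/-! ### Cubics vanishing on the three subspaces -/

section Cubics

/-- The directional derivative `f ↦ ∑ uᵢ ∂f/∂xᵢ`. -/
noncomputable def dirDeriv {n : ℕ} (u : Fin (n + 1) → ℂ) :
    Derivation ℂ (MvPolynomial (Fin (n + 1)) ℂ) (MvPolynomial (Fin (n + 1)) ℂ) :=
  mkDerivation ℂ fun i => C (u i)

/-- The polarization `D_u D_v D_w f` of a cubic `f`. For a cubic this is a constant; it is evaluated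
at the origin. -/
noncomputable def tri {n : ℕ} (u v w : Fin (n + 1) → ℂ) : MvPolynomial (Fin (n + 1)) ℂ →ₗ[ℂ] ℂ :=
  evalAt 0 ∘ₗ (dirDeriv u).toLinearMap ∘ₗ (dirDeriv v).toLinearMap ∘ₗ (dirDeriv w).toLinearMap

theorem dirDeriv_add {n : ℕ} (u v : Fin (n + 1) → ℂ) : dirDeriv (u + v) = dirDeriv u + dirDeriv v :=
  derivation_ext fun i => by simp [dirDeriv]

theorem dirDeriv_smul {n : ℕ} (r : ℂ) (u : Fin (n + 1) → ℂ) :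
    dirDeriv (r • u) = r • dirDeriv u :=
  derivation_ext fun i => by simp [dirDeriv, smul_eq_C_mul]

theorem dirDeriv_comm {n : ℕ} (u v : Fin (n + 1) → ℂ) (f : MvPolynomial (Fin (n + 1)) ℂ) :
    dirDeriv u (dirDeriv v f) = dirDeriv v (dirDeriv u f) := by
  have h : ⁅dirDeriv u, dirDeriv v⁆ = 0 :=
    derivation_ext fun i => by simp [Derivation.commutator_apply, dirDeriv]
  simpa [Derivation.commutator_apply, sub_eq_zero] using congrArg (· f) h

theorem dirDeriv_eq_sum {n : ℕ} (u : Fin (n + 1) → ℂ) (f : MvPolynomial (Fin (n + 1)) ℂ) :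
    dirDeriv u f = ∑ i, C (u i) * pderiv i f := by
  classical
  have hs (g : MvPolynomial (Fin (n + 1)) ℂ) :
      (∑ i, (C (u i) : MvPolynomial (Fin (n + 1)) ℂ) • pderiv (R := ℂ) i) g =
        ∑ i, C (u i) * pderiv i g := by
    have h := congrFun (map_sum (Derivation.coeFnAddMonoidHom (R := ℂ)
      (A := MvPolynomial (Fin (n + 1)) ℂ) (M := MvPolynomial (Fin (n + 1)) ℂ))
      (fun i => (C (u i) : MvPolynomial (Fin (n + 1)) ℂ) • pderiv (R := ℂ) i) Finset.univ) g
    exact (h.trans (Finset.sum_apply _ _ _)).trans (by simp)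
  have h : dirDeriv u = ∑ i, (C (u i) : MvPolynomial (Fin (n + 1)) ℂ) • pderiv (R := ℂ) i :=
    derivation_ext fun i => by rw [hs]; simp [dirDeriv, pderiv_X, Pi.single_apply]
  rw [h, hs]

theorem dirDeriv_isHomogeneous {n d : ℕ} (u : Fin (n + 1) → ℂ) {f : MvPolynomial (Fin (n + 1)) ℂ}
    (hf : f.IsHomogeneous d) : (dirDeriv u f).IsHomogeneous (d - 1) := by
  rw [dirDeriv_eq_sum]
  exact IsHomogeneous.sum _ _ _ fun i _ => by
    simpa using (isHomogeneous_C _ (u i)).mul (hf.pderiv (i := i))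

theorem eval_dirDeriv_self {n d : ℕ} (v : Fin (n + 1) → ℂ) {f : MvPolynomial (Fin (n + 1)) ℂ}
    (hf : f.IsHomogeneous d) : eval v (dirDeriv v f) = d * eval v f := by
  have h := congrArg (eval v) hf.sum_X_mul_pderiv
  simpa [dirDeriv_eq_sum] using h

theorem tri_self {n : ℕ} (v : Fin (n + 1) → ℂ) {f : MvPolynomial (Fin (n + 1)) ℂ}
    (hf : f.IsHomogeneous 3) : tri v v v f = 6 * evalAt v f := by
  have h1 := dirDeriv_isHomogeneous v hf
  have h2 := dirDeriv_isHomogeneous v h1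
  have h3 := dirDeriv_isHomogeneous v h2
  have h4 := totalDegree_eq_zero_iff_eq_C.1 (Nat.le_zero.1 h3.totalDegree_le)
  have h5 : eval 0 (dirDeriv v (dirDeriv v (dirDeriv v f))) =
      eval v (dirDeriv v (dirDeriv v (dirDeriv v f))) := by rw [h4]; simp
  have h6 : tri v v v f = eval 0 (dirDeriv v (dirDeriv v (dirDeriv v f))) := by simp [tri, evalAt]
  rw [h6, h5, eval_dirDeriv_self v h2, eval_dirDeriv_self v h1, eval_dirDeriv_self v hf]
  simp [evalAt]
  ring

theorem tri_left_comm {n : ℕ} (u v w : Fin (n + 1) → ℂ) (f : MvPolynomial (Fin (n + 1)) ℂ) :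
    tri u v w f = tri v u w f := by
  simp [tri, dirDeriv_comm u v]

theorem tri_right_comm {n : ℕ} (u v w : Fin (n + 1) → ℂ) (f : MvPolynomial (Fin (n + 1)) ℂ) :
    tri u v w f = tri u w v f := by
  simp [tri, dirDeriv_comm v w]

theorem tri_add {n : ℕ} (u u' v w : Fin (n + 1) → ℂ) (f : MvPolynomial (Fin (n + 1)) ℂ) :
    tri (u + u') v w f = tri u v w f + tri u' v w f := by
  simp [tri, dirDeriv_add]

theorem tri_smul {n : ℕ} (r : ℂ) (u v w : Fin (n + 1) → ℂ) (f : MvPolynomial (Fin (n + 1)) ℂ) :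
    tri (r • u) v w f = r * tri u v w f := by
  simp [tri, dirDeriv_smul]

/-- The `27` values of a symmetric trilinear form that determine it, if the corresponding cubic
vanishes on the three subspaces. -/
def coreIdx : Fin 27 → ℕ × ℕ × ℕ :=
  ![(0, 1, 2), (0, 1, 5), (0, 1, 6), (0, 2, 3), (0, 2, 4), (1, 2, 5), (1, 2, 6),
    (0, 3, 5), (0, 3, 6), (0, 4, 5), (0, 4, 6), (1, 3, 5), (1, 3, 6), (1, 4, 5), (1, 4, 6),
    (2, 3, 5), (2, 3, 6), (2, 4, 5), (2, 4, 6), (3, 3, 5), (3, 3, 6), (3, 4, 5), (3, 4, 6),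
    (4, 4, 5), (4, 4, 6), (3, 5, 6), (4, 5, 6)]

/-- The properties of the polarization of a cubic that are used below: it is additive in each
argument and symmetric. -/
structure SymmTri {V : Type*} [AddCommGroup V] (B : V → V → V → ℂ) : Prop where
  add : ∀ u u' v w, B (u + u') v w = B u v w + B u' v w
  left_comm : ∀ u v w, B u v w = B v u w
  right_comm : ∀ u v w, B u v w = B u w v

namespace SymmTri

variable {V : Type*} [AddCommGroup V] {B : V → V → V → ℂ}

theorem add₂ (hB : SymmTri B) (u v v' w : V) : B u (v + v') w = B u v w + B u v' w := by
  rw [hB.left_comm, hB.add, hB.left_comm v, hB.left_comm v']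

theorem add₃ (hB : SymmTri B) (u v w w' : V) : B u v (w + w') = B u v w + B u v w' := by
  rw [hB.right_comm, hB.add₂, hB.right_comm u w, hB.right_comm u w']

theorem sub (hB : SymmTri B) (u u' v w : V) : B (u - u') v w = B u v w - B u' v w := by
  rw [eq_sub_iff_add_eq, ← hB.add, sub_add_cancel]

theorem sub₂ (hB : SymmTri B) (u v v' w : V) : B u (v - v') w = B u v w - B u v' w := by
  rw [eq_sub_iff_add_eq, ← hB.add₂, sub_add_cancel]

/-- A trilinear form whose cubic form vanishes on a subspace vanishes on triples in it. -/
theorem eq_zero_of_self (hB : SymmTri B) {L : AddSubgroup V} (h : ∀ v ∈ L, B v v v = 0) {u v w : V}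
    (hu : u ∈ L) (hv : v ∈ L) (hw : w ∈ L) : B u v w = 0 := by
  have h1 := h _ (add_mem (add_mem hu hv) hw)
  have h2 := h _ (add_mem hu hv)
  have h3 := h _ (add_mem hu hw)
  have h4 := h _ (add_mem hv hw)
  have h5 := h _ hu
  have h6 := h _ hv
  have h7 := h _ hw
  simp only [hB.add, hB.add₂, hB.add₃] at h1 h2 h3 h4
  have e1 := hB.right_comm u v w
  have e2 := hB.left_comm u v w
  have e3 := hB.left_comm u w v
  have e4 := hB.right_comm v u w
  have e5 := hB.right_comm w u v
  linear_combination (h1 - h2 - h3 - h4 + h5 + h6 + h7) / 6 + (3 * e1 + 2 * e2 + 2 * e3 + e4 + e5) / 6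

/-- It suffices to check the values of a symmetric form on basis vectors for ordered indices. -/
theorem eq_zero_of_le (hB : SymmTri B) {e : ℕ → V} {p : ℕ → Prop}
    (h : ∀ i j k, i ≤ j → j ≤ k → p k → B (e i) (e j) (e k) = 0) {i j k : ℕ} (hi : p i) (hj : p j)
    (hk : p k) : B (e i) (e j) (e k) = 0 := by
  rcases le_total i j with h1 | h1 <;> rcases le_total j k with h2 | h2 <;>
    rcases le_total i k with h3 | h3
  · exact h _ _ _ h1 h2 hk
  · exact h _ _ _ h1 h2 hk
  · rw [hB.right_comm]; exact h _ _ _ h3 h2 hj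
  · rw [hB.right_comm, hB.left_comm]; exact h _ _ _ h3 h1 hj
  · rw [hB.left_comm]; exact h _ _ _ h1 h3 hk
  · rw [hB.left_comm, hB.right_comm]; exact h _ _ _ h2 h3 hi
  · rw [hB.left_comm, hB.right_comm, hB.left_comm]; exact h _ _ _ h2 h1 hi
  · rw [hB.left_comm, hB.right_comm, hB.left_comm]; exact h _ _ _ h2 h1 hi

/-- Let a form vanish on triples in the subspaces `L ∋ e₀, e₁, e₃, e₄`, `M ∋ e₀, e₂, e₅, e₆` and
`N ∋ e₁, e₂, e₃ + e₅, e₄ + e₆`. If its values at `coreIdx` vanish, it vanishes on the span of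
`e₀, …, e₆`. -/
theorem core_eq_zero (hB : SymmTri B) {e : ℕ → V} {L M N : AddSubgroup V}
    (hL : ∀ u ∈ L, ∀ v ∈ L, ∀ w ∈ L, B u v w = 0) (hM : ∀ u ∈ M, ∀ v ∈ M, ∀ w ∈ M, B u v w = 0)
    (hN : ∀ u ∈ N, ∀ v ∈ N, ∀ w ∈ N, B u v w = 0)
    (eL : ∀ i ∈ [0, 1, 3, 4], e i ∈ L) (eM : ∀ i ∈ [0, 2, 5, 6], e i ∈ M)
    (e1 : e 1 ∈ N) (e2 : e 2 ∈ N) (ep : e 3 + e 5 ∈ N) (eq : e 4 + e 6 ∈ N)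
    (hcore : ∀ s, B (e (coreIdx s).1) (e (coreIdx s).2.1) (e (coreIdx s).2.2) = 0) {i j k : ℕ}
    (hi : i < 7) (hj : j < 7) (hk : k < 7) : B (e i) (e j) (e k) = 0 := by
  obtain ⟨b, hb⟩ : ∃ b : ℕ → ℕ → ℕ → ℂ, ∀ i j k, B (e i) (e j) (e k) = b i j k :=
    ⟨fun i j k => B (e i) (e j) (e k), fun _ _ _ => rfl⟩
  have s1 (i j k : ℕ) (_ : j < i) : b i j k = b j i k := by rw [← hb, hB.left_comm, hb]
  have s2 (i j k : ℕ) (_ : k < j) : b i j k = b i k j := by rw [← hb, hB.right_comm, hb]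
  have l (i j k : ℕ) (hi : i ∈ [0, 1, 3, 4] := by simp) (hj : j ∈ [0, 1, 3, 4] := by simp)
      (hk : k ∈ [0, 1, 3, 4] := by simp) : b i j k = 0 :=
    (hb i j k).symm.trans (hL _ (eL _ hi) _ (eL _ hj) _ (eL _ hk))
  have m (i j k : ℕ) (hi : i ∈ [0, 2, 5, 6] := by simp) (hj : j ∈ [0, 2, 5, 6] := by simp)
      (hk : k ∈ [0, 2, 5, 6] := by simp) : b i j k = 0 :=
    (hb i j k).symm.trans (hM _ (eM _ hi) _ (eM _ hj) _ (eM _ hk))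
  simp only [hb] at hcore
  have c012 : b 0 1 2 = 0 := hcore 0
  have c015 : b 0 1 5 = 0 := hcore 1
  have c016 : b 0 1 6 = 0 := hcore 2
  have c023 : b 0 2 3 = 0 := hcore 3
  have c024 : b 0 2 4 = 0 := hcore 4
  have c125 : b 1 2 5 = 0 := hcore 5
  have c126 : b 1 2 6 = 0 := hcore 6
  have c035 : b 0 3 5 = 0 := hcore 7
  have c036 : b 0 3 6 = 0 := hcore 8
  have c045 : b 0 4 5 = 0 := hcore 9
  have c046 : b 0 4 6 = 0 := hcore 10
  have c135 : b 1 3 5 = 0 := hcore 11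
  have c136 : b 1 3 6 = 0 := hcore 12
  have c145 : b 1 4 5 = 0 := hcore 13
  have c146 : b 1 4 6 = 0 := hcore 14
  have c235 : b 2 3 5 = 0 := hcore 15
  have c236 : b 2 3 6 = 0 := hcore 16
  have c245 : b 2 4 5 = 0 := hcore 17
  have c246 : b 2 4 6 = 0 := hcore 18
  have c335 : b 3 3 5 = 0 := hcore 19
  have c336 : b 3 3 6 = 0 := hcore 20
  have c345 : b 3 4 5 = 0 := hcore 21
  have c346 : b 3 4 6 = 0 := hcore 22
  have c445 : b 4 4 5 = 0 := hcore 23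
  have c446 : b 4 4 6 = 0 := hcore 24
  have c356 : b 3 5 6 = 0 := hcore 25
  have c456 : b 4 5 6 = 0 := hcore 26
  have c112 : b 1 1 2 = 0 := by
    have h := hN _ e1 _ e1 _ e2
    simp only [hb] at h
    linear_combination h
  have c115 : b 1 1 5 = 0 := by
    have h := hN _ e1 _ e1 _ ep
    simp only [hB.add₃, hb] at h
    linear_combination h - l 1 1 3
  have c116 : b 1 1 6 = 0 := by
    have h := hN _ e1 _ e1 _ eq
    simp only [hB.add₃, hb] at h
    linear_combination h - l 1 1 4
  have c122 : b 1 2 2 = 0 := by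
    have h := hN _ e1 _ e2 _ e2
    simp only [hb] at h
    linear_combination h
  have c123 : b 1 2 3 = 0 := by
    have h := hN _ e1 _ e2 _ ep
    simp only [hB.add₃, hb] at h
    linear_combination h - c125
  have c124 : b 1 2 4 = 0 := by
    have h := hN _ e1 _ e2 _ eq
    simp only [hB.add₃, hb] at h
    linear_combination h - c126
  have c155 : b 1 5 5 = 0 := by
    have h := hN _ e1 _ ep _ ep
    simp only [hB.add₂, hB.add₃, hb, s2, Nat.reduceLT] at h
    linear_combination h - l 1 3 3 - 2 * c135
  have c156 : b 1 5 6 = 0 := by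
    have h := hN _ e1 _ ep _ eq
    simp only [hB.add₂, hB.add₃, hb, s2, Nat.reduceLT] at h
    linear_combination h - l 1 3 4 - c136 - c145
  have c166 : b 1 6 6 = 0 := by
    have h := hN _ e1 _ eq _ eq
    simp only [hB.add₂, hB.add₃, hb, s2, Nat.reduceLT] at h
    linear_combination h - l 1 4 4 - 2 * c146
  have c223 : b 2 2 3 = 0 := by
    have h := hN _ e2 _ e2 _ ep
    simp only [hB.add₃, hb] at h
    linear_combination h - m 2 2 5
  have c224 : b 2 2 4 = 0 := by
    have h := hN _ e2 _ e2 _ eq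
    simp only [hB.add₃, hb] at h
    linear_combination h - m 2 2 6
  have c233 : b 2 3 3 = 0 := by
    have h := hN _ e2 _ ep _ ep
    simp only [hB.add₂, hB.add₃, hb, s2, Nat.reduceLT] at h
    linear_combination h - 2 * c235 - m 2 5 5
  have c234 : b 2 3 4 = 0 := by
    have h := hN _ e2 _ ep _ eq
    simp only [hB.add₂, hB.add₃, hb, s2, Nat.reduceLT] at h
    linear_combination h - c236 - c245 - m 2 5 6
  have c244 : b 2 4 4 = 0 := by
    have h := hN _ e2 _ eq _ eq
    simp only [hB.add₂, hB.add₃, hb, s2, Nat.reduceLT] at h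
    linear_combination h - 2 * c246 - m 2 6 6
  have c355 : b 3 5 5 = 0 := by
    have h := hN _ ep _ ep _ ep
    simp only [hB.add, hB.add₂, hB.add₃, hb, s1, s2, Nat.reduceLT] at h
    linear_combination (h - l 3 3 3 - 3 * c335 - m 5 5 5) / 3
  have c455 : b 4 5 5 = 0 := by
    have h := hN _ ep _ ep _ eq
    simp only [hB.add, hB.add₂, hB.add₃, hb, s1, s2, Nat.reduceLT] at h
    linear_combination h - l 3 3 4 - c336 - 2 * c345 - 2 * c356 - m 5 5 6
  have c366 : b 3 6 6 = 0 := by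
    have h := hN _ ep _ eq _ eq
    simp only [hB.add, hB.add₂, hB.add₃, hb, s1, s2, Nat.reduceLT] at h
    linear_combination h - l 3 4 4 - 2 * c346 - c445 - 2 * c456 - m 5 6 6
  have c466 : b 4 6 6 = 0 := by
    have h := hN _ eq _ eq _ eq
    simp only [hB.add, hB.add₂, hB.add₃, hb, s1, s2, Nat.reduceLT] at h
    linear_combination (h - l 4 4 4 - 3 * c446 - m 6 6 6) / 3
  refine hB.eq_zero_of_le (p := (· < 7)) (fun i j k h1 h2 hk => ?_) hi hj hk
  rw [hb]
  interval_cases k <;> interval_cases j <;> interval_cases i <;>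
    first
    | assumption
    | exact l _ _ _ (by decide) (by decide) (by decide)
    | exact m _ _ _ (by decide) (by decide) (by decide)

/-- The analogue of `core_eq_zero` for the bilinear form `B z`. Here the third subspace also
contains `e₄ - e₇`, so no values have to be prescribed. -/
theorem pair_eq_zero (hB : SymmTri B) {e : ℕ → V} {z : V}
    (hL : ∀ i ∈ [0, 1, 3, 4, 7], ∀ j ∈ [0, 1, 3, 4, 7], B z (e i) (e j) = 0)
    (hM : ∀ i ∈ [0, 2, 5, 6, 7], ∀ j ∈ [0, 2, 5, 6, 7], B z (e i) (e j) = 0)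
    (h12 : B z (e 1) (e 2) = 0) (h1p : B z (e 1) (e 3 + e 5) = 0)
    (h1q : B z (e 1) (e 4 + e 6) = 0) (h2p : B z (e 2) (e 3 + e 5) = 0)
    (h2q : B z (e 2) (e 4 + e 6) = 0) (hpp : B z (e 3 + e 5) (e 3 + e 5) = 0)
    (hpq : B z (e 3 + e 5) (e 4 + e 6) = 0) (hqq : B z (e 4 + e 6) (e 4 + e 6) = 0)
    (hpr : B z (e 4 - e 7) (e 3 + e 5) = 0) {i j : ℕ} (hi : i < 7) (hj : j < 7) :
    B z (e i) (e j) = 0 := by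
  obtain ⟨b, hb⟩ : ∃ b : ℕ → ℕ → ℂ, ∀ i j, B z (e i) (e j) = b i j :=
    ⟨fun i j => B z (e i) (e j), fun _ _ => rfl⟩
  have s2 (i j : ℕ) (_ : j < i) : b i j = b j i := by rw [← hb, hB.right_comm, hb]
  simp only [hb] at hL hM
  simp only [hB.add₂, hB.add₃, hB.sub₂, hb, s2, Nat.reduceLT] at h12 h1p h1q h2p h2q hpp hpq hqq hpr
  have l (i j : ℕ) (hi : i ∈ [0, 1, 3, 4, 7] := by simp) (hj : j ∈ [0, 1, 3, 4, 7] := by simp) :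
      b i j = 0 := hL i hi j hj
  have m (i j : ℕ) (hi : i ∈ [0, 2, 5, 6, 7] := by simp) (hj : j ∈ [0, 2, 5, 6, 7] := by simp) :
      b i j = 0 := hM i hi j hj
  have h15 : b 1 5 = 0 := by linear_combination h1p - l 1 3
  have h16 : b 1 6 = 0 := by linear_combination h1q - l 1 4
  have h23 : b 2 3 = 0 := by linear_combination h2p - m 2 5
  have h24 : b 2 4 = 0 := by linear_combination h2q - m 2 6
  have h35 : b 3 5 = 0 := by linear_combination (hpp - l 3 3 - m 5 5) / 2
  have h46 : b 4 6 = 0 := by linear_combination (hqq - l 4 4 - m 6 6) / 2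
  have h45 : b 4 5 = 0 := by linear_combination hpr - l 3 4 + l 3 7 + m 5 7
  have h36 : b 3 6 = 0 := by linear_combination hpq - l 3 4 - m 5 6 - h45
  have hle (i j : ℕ) (hij : i ≤ j) (hj : j < 7) : b i j = 0 := by
    interval_cases j <;> interval_cases i <;>
      first
      | assumption
      | exact l _ _ (by decide) (by decide)
      | exact m _ _ (by decide) (by decide)
  rw [hb]
  rcases le_total i j with h | h
  · exact hle i j h hj
  · rw [← hb, hB.right_comm, hb]
    exact hle j i h hi

end SymmTri

/-- The basis vector with index `k`; it is zero if `n < k`. -/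
noncomputable def bv (n k : ℕ) : Fin (n + 1) → ℂ := fun x => dl k x.val

theorem refForm_mulVec_bv {n k : ℕ} (hk : k ≤ n) (t : Fin 3) :
    (refForm n t).mulVec (bv n k) = fun i => refCoeff t i k := by
  ext i
  simp only [Matrix.mulVec, dotProduct]
  rw [Finset.sum_eq_single (⟨k, by omega⟩ : Fin (n + 1))]
  · simp [refForm, bv, dl]
  · intro x _ hx
    have : x.val ≠ k := fun h => hx (Fin.ext h)
    simp [bv, dl, this]
  · simp

/-- The kernels of the three triples of linear forms. -/
noncomputable def refSub (n : ℕ) (t : Fin 3) : AddSubgroup (Fin (n + 1) → ℂ) :=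
  (LinearMap.ker (refForm n t).mulVecLin).toAddSubgroup

theorem mem_refSub {n : ℕ} {t : Fin 3} {v : Fin (n + 1) → ℂ} :
    v ∈ refSub n t ↔ ∀ i, (refForm n t).mulVec v i = 0 :=
  ⟨fun h i => congrFun h i, fun h => funext h⟩

theorem bv_mem_zero {n k : ℕ} (hk : k ≤ n) (h : k ≠ 2 ∧ k ≠ 5 ∧ k ≠ 6) : bv n k ∈ refSub n 0 := by
  rw [mem_refSub, refForm_mulVec_bv hk, Fin.forall_fin_succ, Fin.forall_fin_two]
  simp [refCoeff, dl, h.1, h.2.1, h.2.2]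

theorem bv_mem_one {n k : ℕ} (hk : k ≤ n) (h : k ≠ 1 ∧ k ≠ 3 ∧ k ≠ 4) : bv n k ∈ refSub n 1 := by
  rw [mem_refSub, refForm_mulVec_bv hk, Fin.forall_fin_succ, Fin.forall_fin_two]
  simp [refCoeff, dl, h.1, h.2.1, h.2.2]

theorem bv_mem_two {n k : ℕ} (hk : k ≤ n) (h : k = 1 ∨ k = 2 ∨ 8 ≤ k) : bv n k ∈ refSub n 2 := by
  rw [mem_refSub, refForm_mulVec_bv hk, Fin.forall_fin_succ, Fin.forall_fin_two]
  have h0 : k ≠ 0 := by omega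
  have h3 : k ≠ 3 := by omega
  have h4 : k ≠ 4 := by omega
  have h5 : k ≠ 5 := by omega
  have h6 : k ≠ 6 := by omega
  have h7 : k ≠ 7 := by omega
  simp [refCoeff, dl, h0, h3, h4, h5, h6, h7]

theorem bv_add_mem_two {n : ℕ} (hn : 6 ≤ n) : bv n 3 + bv n 5 ∈ refSub n 2 := by
  rw [mem_refSub, Matrix.mulVec_add, refForm_mulVec_bv (by omega), refForm_mulVec_bv (by omega),
    Fin.forall_fin_succ, Fin.forall_fin_two]
  simp [refCoeff, dl]

theorem bv_add_mem_two' {n : ℕ} (hn : 6 ≤ n) : bv n 4 + bv n 6 ∈ refSub n 2 := by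
  rw [mem_refSub, Matrix.mulVec_add, refForm_mulVec_bv (by omega), refForm_mulVec_bv (by omega),
    Fin.forall_fin_succ, Fin.forall_fin_two]
  simp [refCoeff, dl]

theorem bv_sub_mem_two {n : ℕ} (hn : 7 ≤ n) : bv n 4 - bv n 7 ∈ refSub n 2 := by
  rw [mem_refSub, Matrix.mulVec_sub, refForm_mulVec_bv (by omega), refForm_mulVec_bv (by omega),
    Fin.forall_fin_succ, Fin.forall_fin_two]
  simp [refCoeff, dl]

/-- If a cubic form vanishes on the three reference subspaces and its polarization vanishes at
`coreIdx`, the polarization vanishes on all basis vectors. The forms `B eₖ` with `k ≥ 7` are treated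
by `pair_eq_zero`; for `k = 7` its hypotheses follow from the case of indices less than `7`, as
`e₇` is congruent to `e₄` modulo the third subspace. -/
theorem SymmTri.eq_zero_of_refSub {n : ℕ} (hn : 6 ≤ n)
    {B : (Fin (n + 1) → ℂ) → (Fin (n + 1) → ℂ) → (Fin (n + 1) → ℂ) → ℂ} (hB : SymmTri B)
    (hs : ∀ t, ∀ v ∈ refSub n t, B v v v = 0)
    (hcore : ∀ s, B (bv n (coreIdx s).1) (bv n (coreIdx s).2.1) (bv n (coreIdx s).2.2) = 0)
    {i j k : ℕ} (hi : i ≤ n) (hj : j ≤ n) (hk : k ≤ n) : B (bv n i) (bv n j) (bv n k) = 0 := by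
  have hL (t : Fin 3) : ∀ u ∈ refSub n t, ∀ v ∈ refSub n t, ∀ w ∈ refSub n t, B u v w = 0 :=
    fun u hu v hv w hw => hB.eq_zero_of_self (hs t) hu hv hw
  have e1 : bv n 1 ∈ refSub n 2 := bv_mem_two (by omega) (by omega)
  have e2 : bv n 2 ∈ refSub n 2 := bv_mem_two (by omega) (by omega)
  have ep := bv_add_mem_two hn
  have eq := bv_add_mem_two' hn
  have core {i j k : ℕ} (hi : i < 7) (hj : j < 7) (hk : k < 7) :
      B (bv n i) (bv n j) (bv n k) = 0 := by
    refine hB.core_eq_zero (hL 0) (hL 1) (hL 2) (fun i hi => ?_) (fun i hi => ?_) e1 e2 ep eq hcore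
      hi hj hk
    · simp at hi; exact bv_mem_zero (by omega) (by omega)
    · simp at hi; exact bv_mem_one (by omega) (by omega)
  refine hB.eq_zero_of_le (p := (· ≤ n)) (fun i j k h1 h2 hk => ?_) hi hj hk
  rcases lt_or_ge k 7 with h7 | h7
  · exact core (by omega) (by omega) h7
  rcases lt_or_ge j 7 with hj7 | hj7
  · rw [hB.right_comm, hB.left_comm]
    have l : ∀ i ∈ [0, 1, 3, 4, 7], ∀ j ∈ [0, 1, 3, 4, 7], B (bv n k) (bv n i) (bv n j) = 0 := by
      intro i hi j hj
      simp at hi hj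
      exact hL 0 _ (bv_mem_zero hk (by omega)) _ (bv_mem_zero (by omega) (by omega)) _
        (bv_mem_zero (by omega) (by omega))
    have m : ∀ i ∈ [0, 2, 5, 6, 7], ∀ j ∈ [0, 2, 5, 6, 7], B (bv n k) (bv n i) (bv n j) = 0 := by
      intro i hi j hj
      simp at hi hj
      exact hL 1 _ (bv_mem_one hk (by omega)) _ (bv_mem_one (by omega) (by omega)) _
        (bv_mem_one (by omega) (by omega))
    have er := bv_sub_mem_two (n := n) (by omega)
    rcases eq_or_lt_of_le h7 with rfl | h8
    · have h47 {x y : Fin (n + 1) → ℂ} (hx : x ∈ refSub n 2) (hy : y ∈ refSub n 2)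
          (h : B (bv n 4) x y = 0) : B (bv n 7) x y = 0 := by
        have h' := hL 2 _ er _ hx _ hy
        rw [hB.sub, h] at h'
        linear_combination -h'
      refine hB.pair_eq_zero l m (h47 e1 e2 ?_) (h47 e1 ep ?_) (h47 e1 eq ?_) (h47 e2 ep ?_)
        (h47 e2 eq ?_) (h47 ep ep ?_) (h47 ep eq ?_) (h47 eq eq ?_) ?_ (by omega) hj7
      · simp [core]
      · simp [hB.add₃, core]
      · simp [hB.add₃, core]
      · simp [hB.add₃, core]
      · simp [hB.add₃, core]
      · simp [hB.add₂, hB.add₃, core]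
      · simp [hB.add₂, hB.add₃, core]
      · simp [hB.add₂, hB.add₃, core]
      · have h := hL 2 _ er _ er _ ep
        have h77 : B (bv n 7) (bv n 7) (bv n 3 + bv n 5) = 0 := by
          rw [hB.add₃, l 7 (by decide) 3 (by decide), m 7 (by decide) 5 (by decide), add_zero]
        have h44 : B (bv n 4) (bv n 4) (bv n 3 + bv n 5) = 0 := by simp [hB.add₃, core]
        rw [hB.sub, hB.sub₂, hB.sub₂, hB.left_comm (bv n 4) (bv n 7)] at h
        rw [hB.sub₂]
        linear_combination (-h - h77 + h44) / 2
    · have ek : bv n k ∈ refSub n 2 := bv_mem_two hk (by omega)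
      have N := hL 2 _ ek
      exact hB.pair_eq_zero l m (N _ e1 _ e2) (N _ e1 _ ep) (N _ e1 _ eq) (N _ e2 _ ep)
        (N _ e2 _ eq) (N _ ep _ ep) (N _ ep _ eq) (N _ eq _ eq) (N _ er _ ep) (by omega) hj7
  · by_cases h : i ≠ 2 ∧ i ≠ 5 ∧ i ≠ 6
    · exact hL 0 _ (bv_mem_zero (by omega) h) _ (bv_mem_zero (by omega) (by omega)) _
        (bv_mem_zero hk (by omega))
    · exact hL 1 _ (bv_mem_one (by omega) (by omega)) _ (bv_mem_one (by omega) (by omega)) _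
        (bv_mem_one hk (by omega))

theorem symmTri_tri {n : ℕ} (f : MvPolynomial (Fin (n + 1)) ℂ) :
    SymmTri fun u v w : Fin (n + 1) → ℂ => tri u v w f where
  add u u' v w := tri_add u u' v w f
  left_comm u v w := tri_left_comm u v w f
  right_comm u v w := tri_right_comm u v w f

theorem tri_eq_zero_of_bv {n : ℕ} {v w : Fin (n + 1) → ℂ} {f : MvPolynomial (Fin (n + 1)) ℂ}
    (h : ∀ k ≤ n, tri (bv n k) v w f = 0) (u : Fin (n + 1) → ℂ) : tri u v w f = 0 := by
  let φ : (Fin (n + 1) → ℂ) →ₗ[ℂ] ℂ :=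
    { toFun := fun u => tri u v w f
      map_add' := fun u u' => tri_add u u' v w f
      map_smul' := fun r u => tri_smul r u v w f }
  have hφ : φ = 0 := by
    refine LinearMap.pi_ext' fun i => LinearMap.ext_ring ?_
    have hi : bv n i.val = Pi.single i 1 := by
      ext x
      simp [bv, dl, Pi.single_apply, Fin.ext_iff]
    have := h i.val (by omega)
    rw [hi] at this
    exact this
  exact congrArg (· u) hφ

/-- Cubics vanishing on the three reference subspaces are determined by the `27` values of their
polarizations at `coreIdx`. -/
theorem finrank_ref_cubics {n : ℕ} (hn : 6 ≤ n) :
    Module.finrank ℂ (SingSpace n 3 ∅ {v | (refForm n 0).mulVec v = 0 ∨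
      (refForm n 1).mulVec v = 0 ∨ (refForm n 2).mulVec v = 0}) ≤ 27 := by
  let K := SingSpace n 3 ∅ {v | (refForm n 0).mulVec v = 0 ∨
    (refForm n 1).mulVec v = 0 ∨ (refForm n 2).mulVec v = 0}
  let g : K →ₗ[ℂ] (Fin 27 → ℂ) := LinearMap.pi (fun s =>
    tri (bv n (coreIdx s).1) (bv n (coreIdx s).2.1) (bv n (coreIdx s).2.2)) ∘ₗ K.subtype
  have hg : Function.Injective g := by
    rw [injective_iff_map_eq_zero]
    rintro ⟨f, hf⟩ h
    obtain ⟨hom, van, -⟩ := mem_singSpace.1 hf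
    have hb {i j k : ℕ} (hi : i ≤ n) (hj : j ≤ n) (hk : k ≤ n) :
        tri (bv n i) (bv n j) (bv n k) f = 0 := by
      refine (symmTri_tri f).eq_zero_of_refSub hn (fun t v hv => ?_) (fun s => congrFun h s) hi hj hk
      have hv' : (refForm n t).mulVec v = 0 := funext (mem_refSub.1 hv)
      have h0 : evalAt v f = 0 := van v <| by
        fin_cases t
        · exact .inl hv'
        · exact .inr (.inl hv')
        · exact .inr (.inr hv')
      simp only [tri_self v hom, h0, mul_zero]
    have h1 (v : Fin (n + 1) → ℂ) : tri v v v f = 0 := by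
      refine tri_eq_zero_of_bv (fun i hi => ?_) v
      rw [tri_left_comm]
      refine tri_eq_zero_of_bv (fun j hj => ?_) v
      rw [tri_right_comm, tri_left_comm]
      refine tri_eq_zero_of_bv (fun k hk => ?_) v
      exact hb hk hj hi
    rw [Subtype.ext_iff]
    refine MvPolynomial.funext fun v => ?_
    have h2 := h1 v
    rw [tri_self v hom] at h2
    simpa [evalAt] using h2
  simpa using LinearMap.finrank_le_finrank_of_injective hg

end Cubics

theorem cubics_three_codim3_subspaces (n : ℕ) (hn : 6 ≤ n) :
    Generic
      (ι := (Fin 3 × Fin (n + 1) × Fin (n - 2)) ⊕ (Fin 3 × Fin (n - 2)) ⊕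
        (Fin 3 × Fin (n - 2)) ⊕ (Fin 2 × Fin (n - 2))) fun t =>
      let A : Fin 3 → Matrix (Fin (n + 1)) (Fin (n - 2)) ℂ :=
        fun k => Matrix.of fun i j => t (Sum.inl (k, i, j))
      let l : Fin 3 → Fin (n + 1) → ℂ :=
        fun s => (A 0).mulVec fun j => t (Sum.inr (Sum.inl (s, j)))
      let m : Fin 3 → Fin (n + 1) → ℂ :=
        fun s => (A 1).mulVec fun j => t (Sum.inr (Sum.inr (Sum.inl (s, j))))
      let nn : Fin 2 → Fin (n + 1) → ℂ :=
        fun s => (A 2).mulVec fun j => t (Sum.inr (Sum.inr (Sum.inr (s, j))))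
      let U : Set (Fin (n + 1) → ℂ) :=
        Set.range (A 0).mulVec ∪ Set.range (A 1).mulVec ∪ Set.range (A 2).mulVec
      let S : Set (Fin (n + 1) → ℂ) := Set.range l ∪ Set.range m ∪ Set.range nn
      (∀ k, Function.Injective (A k).mulVec) ∧
      Module.finrank ℂ (SingSpace n 3 S U) = 3 ∧
      ∀ q : Fin (n + 1) → ℂ, q ≠ 0 →
        (∀ f ∈ SingSpace n 3 S U, SingularAt f q) → q ∈ U :=
  generic_of_goodConfig n hn (refForm n) (refInv n) (refForm_mul_refInv hn)
    (refForm_mulVec_refPts hn 0) (refForm_mulVec_refPts hn 1)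
    (fun s => refForm_mulVec_refPts hn 2 s.castSucc) (ref_goodConfig hn) (finrank_ref_cubics hn)
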